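/- An almost quaternion-Hermitian manifold M of dimension 4n ≥ 8 is QKT if and only if for each local adapted basis I,J,K there are local one-forms γ_I, γ_J, γ_K such that β_J − β_I = I dω_I − J dω_J = I(Kγ_K) ∧ ω_I − J(Kγ_K) ∧ ω_J + Kγ_K^− ∧ ω_K, where γ_K^− = Iγ_I − Jγ_J, together with the equations obtained by cyclic permutation of (I,J,K). In this case the skew-symmetric torsion three-form T satisfies 2T = 2(I dω_I + J(Kγ_K) ∧ ω_J + K(Jγ_J) ∧ ω_K) = β_I + J(Iγ_I) ∧ ω_J + K(Iγ_I) ∧ ω_K + Iγ_I^+ ∧ ω_I (and cyclically), where γ_I^+ = Jγ_J + Kγ_K, and the one-forms γ_A are given by 2(n−1) Iγ_I = (Λ_J + IΛ_K) dω_J = (Λ_K − IΛ_J) dω_K (and cyclically). -/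

import Mathlib

/-!  Synthetic (Koszul-style) model of an almost quaternion-Hermitian `4n`-manifold.

`C` plays the role of the commutative ℝ-algebra of smooth functions and `V` that of
the `C`-module of vector fields, equipped with a directional derivative `D`, a Lie
bracket, a Riemannian metric `g` together with its Levi-Civita connection `nab`
(characterised by being torsion-free and metric), a local adapted basis `I, J, K`
of anticommuting almost complex structures with `K = I J`, each compatible with the
metric, and a (local) orthonormal frame.  -/

noncomputable section

open scoped BigOperators

structure AQH (n : ℕ) (C : Type*) (V : Type*) [CommRing C] [Algebra ℝ C]
    [AddCommGroup V] [Module C V] where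
  /-- derivative of a function along a vector field -/
  D : V → C → C
  D_add : ∀ X f g, D X (f + g) = D X f + D X g
  D_mul : ∀ X f g, D X (f * g) = f * D X g + g * D X f
  D_const : ∀ X (r : ℝ), D X (algebraMap ℝ C r) = 0
  D_addX : ∀ X Y f, D (X + Y) f = D X f + D Y f
  D_smulX : ∀ (f : C) (X : V) (h : C), D (f • X) h = f * D X h
  /-- the Lie bracket of vector fields -/
  bracket : V → V → V
  bracket_skew : ∀ X Y, bracket X Y = -bracket Y X
  bracket_add : ∀ X Y Z, bracket X (Y + Z) = bracket X Y + bracket X Z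
  bracket_smul : ∀ X (f : C) Y, bracket X (f • Y) = f • bracket X Y + (D X f) • Y
  bracket_jacobi : ∀ X Y Z,
    bracket X (bracket Y Z) + bracket Y (bracket Z X) + bracket Z (bracket X Y) = 0
  D_bracket : ∀ X Y f, D (bracket X Y) f = D X (D Y f) - D Y (D X f)
  /-- the Riemannian metric -/
  g : V → V → C
  g_symm : ∀ X Y, g X Y = g Y X
  g_add : ∀ X Y Z, g (X + Y) Z = g X Z + g Y Z
  g_smul : ∀ (f : C) X Y, g (f • X) Y = f * g X Y
  /-- the Levi-Civita connection -/
  nab : V → V → V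
  nab_addX : ∀ X Y Z, nab (X + Y) Z = nab X Z + nab Y Z
  nab_smulX : ∀ (f : C) X Y, nab (f • X) Y = f • nab X Y
  nab_add : ∀ X Y Z, nab X (Y + Z) = nab X Y + nab X Z
  nab_leibniz : ∀ X (f : C) Y, nab X (f • Y) = f • nab X Y + (D X f) • Y
  torsion_free : ∀ X Y, nab X Y - nab Y X = bracket X Y
  nab_metric : ∀ X Y Z, D X (g Y Z) = g (nab X Y) Z + g Y (nab X Z)
  /-- the (local) adapted basis of almost complex structures -/
  I : V → V
  J : V → V
  K : V → V
  I_lin : ∀ (f : C) X Y, I (f • X + Y) = f • I X + I Y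
  J_lin : ∀ (f : C) X Y, J (f • X + Y) = f • J X + J Y
  K_lin : ∀ (f : C) X Y, K (f • X + Y) = f • K X + K Y
  I_sq : ∀ X, I (I X) = -X
  J_sq : ∀ X, J (J X) = -X
  K_def : ∀ X, K X = I (J X)
  anticomm : ∀ X, I (J X) = -J (I X)
  I_metric : ∀ X Y, g (I X) (I Y) = g X Y
  J_metric : ∀ X Y, g (J X) (J Y) = g X Y
  /-- a (local) orthonormal frame -/
  frame : Fin (4 * n) → V
  frame_orthonormal : ∀ i j, g (frame i) (frame j) = if i = j then 1 else 0
  frame_span : ∀ X, X = ∑ i, g X (frame i) • frame i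

namespace AQH

section ops

variable {C V : Type*} [CommRing C]

/-- the operator `A_(1)` on covariant 3-tensors -/
def op1 (A : V → V) (ψ : V → V → V → C) : V → V → V → C := fun X Y Z => -ψ (A X) Y Z

/-- the operator `A_(2)` on covariant 3-tensors -/
def op2 (A : V → V) (ψ : V → V → V → C) : V → V → V → C := fun X Y Z => -ψ X (A Y) Z

/-- the operator `A_(3)` on covariant 3-tensors -/
def op3 (A : V → V) (ψ : V → V → V → C) : V → V → V → C := fun X Y Z => -ψ X Y (A Z)

/-- the operator `A_(12) = A_(1) A_(2)` on covariant 3-tensors -/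
def op12 (A : V → V) (ψ : V → V → V → C) : V → V → V → C := fun X Y Z => ψ (A X) (A Y) Z

/-- the operator `A_(13) = A_(1) A_(3)` on covariant 3-tensors -/
def op13 (A : V → V) (ψ : V → V → V → C) : V → V → V → C := fun X Y Z => ψ (A X) Y (A Z)

/-- the operator `A_(23) = A_(2) A_(3)` on covariant 3-tensors -/
def op23 (A : V → V) (ψ : V → V → V → C) : V → V → V → C := fun X Y Z => ψ X (A Y) (A Z)

/-- the operator `𝓛_A = A_(12) + A_(13) + A_(23)` on three-forms -/
def calL (A : V → V) (ψ : V → V → V → C) : V → V → V → C :=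
  fun X Y Z => op12 A ψ X Y Z + op13 A ψ X Y Z + op23 A ψ X Y Z

/-- the action `(A ν)(X) = -ν (A X)` of `A` on a one-form -/
def act1 (A : V → V) (ν : V → C) : V → C := fun X => -ν (A X)

/-- the action `(A ψ)(X,Y,Z) = -ψ(AX,AY,AZ)` of `A` on a three-form -/
def act3 (A : V → V) (ψ : V → V → V → C) : V → V → V → C :=
  fun X Y Z => -ψ (A X) (A Y) (A Z)

/-- wedge product of two one-forms -/
def wedge11 (α β : V → C) : V → V → C := fun X Y => α X * β Y - α Y * β X

/-- wedge product of a one-form and a two-form -/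
def wedge12 (ν : V → C) (ω : V → V → C) : V → V → V → C :=
  fun X Y Z => ν X * ω Y Z - ν Y * ω X Z + ν Z * ω X Y

/-- wedge product of two two-forms -/
def wedge22 (α β : V → V → C) : V → V → V → V → C := fun X Y Z W =>
  α X Y * β Z W - α X Z * β Y W + α X W * β Y Z
    + α Z W * β X Y - α Y W * β X Z + α Y Z * β X W

/-- a (0,3)-tensor is an alternating three-form -/
def IsAlt3 (T : V → V → V → C) : Prop :=
  (∀ X Y Z, T Y X Z = -T X Y Z) ∧ (∀ X Y Z, T X Z Y = -T X Y Z)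

variable [AddCommGroup V] [Module C V]

/-- `C`-linearity (tensoriality) of a three-form in its first argument -/
def Lin3 (T : V → V → V → C) : Prop :=
  ∀ (f : C) X X' Y Z, T (f • X + X') Y Z = f * T X Y Z + T X' Y Z

/-- `C`-linearity (tensoriality) of a one-form -/
def Lin1 (ν : V → C) : Prop := ∀ (f : C) X X', ν (f • X + X') = f * ν X + ν X'

end ops

section derived

variable {n : ℕ} {C V : Type*} [CommRing C] [Algebra ℝ C] [AddCommGroup V] [Module C V]
  [Module ℝ V] [IsScalarTower ℝ C V]

variable (M : AQH n C V)

/-- the Kähler form `ω_A(X,Y) = g(X, A Y)` -/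
def omega (A : V → V) : V → V → C := fun X Y => M.g X (A Y)

/-- `(∇_X A) Y` -/
def nabA (A : V → V) : V → V → V := fun X Y => M.nab X (A Y) - A (M.nab X Y)

/-- covariant derivative of a 2-form: `(∇_X ψ)(Y,Z)` -/
def nab2 (ψ : V → V → C) : V → V → V → C :=
  fun X Y Z => M.D X (ψ Y Z) - ψ (M.nab X Y) Z - ψ Y (M.nab X Z)

/-- covariant derivative of a 4-form -/
def nab4 (ψ : V → V → V → V → C) : V → V → V → V → V → C :=
  fun X Y Z W U => M.D X (ψ Y Z W U) - ψ (M.nab X Y) Z W U - ψ Y (M.nab X Z) W U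
    - ψ Y Z (M.nab X W) U - ψ Y Z W (M.nab X U)

/-- exterior derivative of a one-form -/
def d1 (ν : V → C) : V → V → C :=
  fun X Y => M.D X (ν Y) - M.D Y (ν X) - ν (M.bracket X Y)

/-- exterior derivative of a two-form -/
def d2 (ψ : V → V → C) : V → V → V → C :=
  fun X Y Z => M.D X (ψ Y Z) - M.D Y (ψ X Z) + M.D Z (ψ X Y)
    - ψ (M.bracket X Y) Z + ψ (M.bracket X Z) Y - ψ (M.bracket Y Z) X

/-- exterior derivative of a four-form -/
def d4 (ψ : V → V → V → V → C) : V → V → V → V → V → C := fun X Y Z W U =>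
  M.D X (ψ Y Z W U) - M.D Y (ψ X Z W U) + M.D Z (ψ X Y W U) - M.D W (ψ X Y Z U)
      + M.D U (ψ X Y Z W)
    - ψ (M.bracket X Y) Z W U + ψ (M.bracket X Z) Y W U - ψ (M.bracket X W) Y Z U
      + ψ (M.bracket X U) Y Z W
    - ψ (M.bracket Y Z) X W U + ψ (M.bracket Y W) X Z U - ψ (M.bracket Y U) X Z W
    - ψ (M.bracket Z W) X Y U + ψ (M.bracket Z U) X Y W
    - ψ (M.bracket W U) X Y Z

/-- the Nijenhuis tensor `N_A(X,Y)` -/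
def nijV (A : V → V) : V → V → V := fun X Y =>
  M.bracket X Y + A (M.bracket (A X) Y) + A (M.bracket X (A Y)) - M.bracket (A X) (A Y)

/-- the Nijenhuis `(0,3)`-tensor `N_A(X,Y,Z) = g(X, N_A(Y,Z))` -/
def nij3 (A : V → V) : V → V → V → C := fun X Y Z => M.g X (M.nijV A Y Z)

/-- the induced inner product of two 2-forms,
`⟨ψ,φ⟩ = (1/2!) ψ(e_i,e_j) φ(e_i,e_j)` -/
def inner2 (ψ φ : V → V → C) : C :=
  (1/2 : ℝ) • ∑ i, ∑ j, ψ (M.frame i) (M.frame j) * φ (M.frame i) (M.frame j)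

/-- the contraction `(Λ_A β)(X) = ⟨X ⌟ β, ω_A⟩` of a three-form -/
def Lam (A : V → V) (β : V → V → V → C) : V → C :=
  fun X => (1/2 : ℝ) •
    ∑ i, ∑ j, β X (M.frame i) (M.frame j) * M.omega A (M.frame i) (M.frame j)

/-- `λ_I(X) = (1/2n) ⟨∇_X ω_J, ω_K⟩` -/
def lambdaI : V → C := fun X =>
  (1/(2*(n:ℝ))) • M.inner2 (fun Y Z => M.nab2 (M.omega M.J) X Y Z) (M.omega M.K)

/-- `λ_J(X) = (1/2n) ⟨∇_X ω_K, ω_I⟩` -/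
def lambdaJ : V → C := fun X =>
  (1/(2*(n:ℝ))) • M.inner2 (fun Y Z => M.nab2 (M.omega M.K) X Y Z) (M.omega M.I)

/-- `λ_K(X) = (1/2n) ⟨∇_X ω_I, ω_J⟩` -/
def lambdaK : V → C := fun X =>
  (1/(2*(n:ℝ))) • M.inner2 (fun Y Z => M.nab2 (M.omega M.I) X Y Z) (M.omega M.J)

/-- codifferential of a two-form -/
def codiff2 (ψ : V → V → C) : V → C := fun Z => -∑ i, M.nab2 ψ (M.frame i) (M.frame i) Z

/-- codifferential of a four-form -/
def codiff4 (ψ : V → V → V → V → C) : V → V → V → C :=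
  fun X Y Z => -∑ i, M.nab4 ψ (M.frame i) (M.frame i) X Y Z

/-- `β_I = J dω_J + K dω_K` -/
def betaI : V → V → V → C := fun X Y Z =>
  act3 M.J (M.d2 (M.omega M.J)) X Y Z + act3 M.K (M.d2 (M.omega M.K)) X Y Z

/-- `β_J = K dω_K + I dω_I` -/
def betaJ : V → V → V → C := fun X Y Z =>
  act3 M.K (M.d2 (M.omega M.K)) X Y Z + act3 M.I (M.d2 (M.omega M.I)) X Y Z

/-- `β_K = I dω_I + J dω_J` -/
def betaK : V → V → V → C := fun X Y Z =>
  act3 M.I (M.d2 (M.omega M.I)) X Y Z + act3 M.J (M.d2 (M.omega M.J)) X Y Z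

/-- the intrinsic torsion
`ξ_X Y = -(1/4) Σ_A A (∇_X A) Y + (1/2) Σ_A λ_A(X) A Y` -/
def xi : V → V → V := fun X Y =>
  (-(1/4 : ℝ)) • (M.I (M.nabA M.I X Y) + M.J (M.nabA M.J X Y) + M.K (M.nabA M.K X Y))
    + (1/2 : ℝ) • (M.lambdaI X • M.I Y + M.lambdaJ X • M.J Y + M.lambdaK X • M.K Y)

/-- the one-form `ν^I_4 = I Λ_I β_I` -/
def nu4I : V → C := act1 M.I (M.Lam M.I M.betaI)

/-- the one-form `ν^J_4 = J Λ_J β_J` -/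
def nu4J : V → C := act1 M.J (M.Lam M.J M.betaJ)

/-- the one-form `ν^K_4 = K Λ_K β_K` -/
def nu4K : V → C := act1 M.K (M.Lam M.K M.betaK)

/-- `ν^I_3`, determined by `J Λ_J β_I = (1/(2n-1)) (ν^I_4 + (2n+1)(n-1) ν^I_3)` -/
def nu3I : V → C := fun X =>
  (1/((2*(n:ℝ)+1) * ((n:ℝ)-1))) •
    ((2*(n:ℝ)-1) • act1 M.J (M.Lam M.J M.betaI) X - M.nu4I X)

/-- `ν^J_3`, determined by `K Λ_K β_J = (1/(2n-1)) (ν^J_4 + (2n+1)(n-1) ν^J_3)` -/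
def nu3J : V → C := fun X =>
  (1/((2*(n:ℝ)+1) * ((n:ℝ)-1))) •
    ((2*(n:ℝ)-1) • act1 M.K (M.Lam M.K M.betaJ) X - M.nu4J X)

/-- `ν^K_3`, determined by `I Λ_I β_K = (1/(2n-1)) (ν^K_4 + (2n+1)(n-1) ν^K_3)` -/
def nu3K : V → C := fun X =>
  (1/((2*(n:ℝ)+1) * ((n:ℝ)-1))) •
    ((2*(n:ℝ)-1) • act1 M.I (M.Lam M.I M.betaK) X - M.nu4K X)

/-- `β^{(E)}_{3I} = -(1/2) Jν^I_3 ∧ ω_J - (1/2) Kν^I_3 ∧ ω_K + (1/(2n-1)) Iν^I_3 ∧ ω_I` -/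
def betaE3I : V → V → V → C := fun X Y Z =>
  (-(1/2:ℝ)) • wedge12 (act1 M.J M.nu3I) (M.omega M.J) X Y Z
    + (-(1/2:ℝ)) • wedge12 (act1 M.K M.nu3I) (M.omega M.K) X Y Z
    + (1/(2*(n:ℝ)-1)) • wedge12 (act1 M.I M.nu3I) (M.omega M.I) X Y Z

def betaE3J : V → V → V → C := fun X Y Z =>
  (-(1/2:ℝ)) • wedge12 (act1 M.K M.nu3J) (M.omega M.K) X Y Z
    + (-(1/2:ℝ)) • wedge12 (act1 M.I M.nu3J) (M.omega M.I) X Y Z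
    + (1/(2*(n:ℝ)-1)) • wedge12 (act1 M.J M.nu3J) (M.omega M.J) X Y Z

def betaE3K : V → V → V → C := fun X Y Z =>
  (-(1/2:ℝ)) • wedge12 (act1 M.I M.nu3K) (M.omega M.I) X Y Z
    + (-(1/2:ℝ)) • wedge12 (act1 M.J M.nu3K) (M.omega M.J) X Y Z
    + (1/(2*(n:ℝ)-1)) • wedge12 (act1 M.K M.nu3K) (M.omega M.K) X Y Z

/-- `β_{4I} = -(1/(2n-1)) Iν^I_4 ∧ ω_I` -/
def beta4I : V → V → V → C := fun X Y Z =>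
  (-(1/(2*(n:ℝ)-1))) • wedge12 (act1 M.I M.nu4I) (M.omega M.I) X Y Z

def beta4J : V → V → V → C := fun X Y Z =>
  (-(1/(2*(n:ℝ)-1))) • wedge12 (act1 M.J M.nu4J) (M.omega M.J) X Y Z

def beta4K : V → V → V → C := fun X Y Z =>
  (-(1/(2*(n:ℝ)-1))) • wedge12 (act1 M.K M.nu4K) (M.omega M.K) X Y Z

/-- `β_I^{(3+K)} = β_I - β^{(E)}_{3I} - β_{4I}` -/
def beta3KI : V → V → V → C := fun X Y Z => M.betaI X Y Z - M.betaE3I X Y Z - M.beta4I X Y Z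

def beta3KJ : V → V → V → C := fun X Y Z => M.betaJ X Y Z - M.betaE3J X Y Z - M.beta4J X Y Z

def beta3KK : V → V → V → C := fun X Y Z => M.betaK X Y Z - M.betaE3K X Y Z - M.beta4K X Y Z

/-- `β_I^{(3)} = (1/6) (2 - 𝓛_J - 𝓛_K) β_I^{(3+K)}` -/
def beta3I : V → V → V → C := fun X Y Z =>
  (1/6:ℝ) • ((2:ℝ) • M.beta3KI X Y Z - calL M.J M.beta3KI X Y Z - calL M.K M.beta3KI X Y Z)

def beta3J : V → V → V → C := fun X Y Z =>
  (1/6:ℝ) • ((2:ℝ) • M.beta3KJ X Y Z - calL M.K M.beta3KJ X Y Z - calL M.I M.beta3KJ X Y Z)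

def beta3K : V → V → V → C := fun X Y Z =>
  (1/6:ℝ) • ((2:ℝ) • M.beta3KK X Y Z - calL M.I M.beta3KK X Y Z - calL M.J M.beta3KK X Y Z)

/-- `β_I^{(K)} = (1/6) (4 + 𝓛_J + 𝓛_K) β_I^{(3+K)}` -/
def betaKI : V → V → V → C := fun X Y Z =>
  (1/6:ℝ) • ((4:ℝ) • M.beta3KI X Y Z + calL M.J M.beta3KI X Y Z + calL M.K M.beta3KI X Y Z)

def betaKJ : V → V → V → C := fun X Y Z =>
  (1/6:ℝ) • ((4:ℝ) • M.beta3KJ X Y Z + calL M.K M.beta3KJ X Y Z + calL M.I M.beta3KJ X Y Z)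

def betaKK : V → V → V → C := fun X Y Z =>
  (1/6:ℝ) • ((4:ℝ) • M.beta3KK X Y Z + calL M.I M.beta3KK X Y Z + calL M.J M.beta3KK X Y Z)

/-- the three-form `ψ^{(3)} = (1/12)(β_I^{(3)} + β_J^{(3)} + β_K^{(3)})` determining `ξ_{33}` -/
def psi3 : V → V → V → C := fun X Y Z =>
  (1/12:ℝ) • (M.beta3I X Y Z + M.beta3J X Y Z + M.beta3K X Y Z)

/-- the three-form `ψ^{(K)} = -(1/48)(β_I^{(K)} + β_J^{(K)} + β_K^{(K)})` determining `ξ_{KH}` -/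
def psiK : V → V → V → C := fun X Y Z =>
  (-(1/48:ℝ)) • (M.betaKI X Y Z + M.betaKJ X Y Z + M.betaKK X Y Z)

/-- the three-form `ψ^{(3)}_I` determining `ξ_{3H}` -/
def psi3I : V → V → V → C := fun X Y Z =>
  (-(1/8:ℝ)) • M.beta3I X Y Z
    + (1/48:ℝ) • ((3:ℝ) • (M.beta3I X Y Z + M.beta3J X Y Z + M.beta3K X Y Z)
        + calL M.I (fun a b c => M.beta3I a b c + M.beta3J a b c + M.beta3K a b c) X Y Z)

def psi3J : V → V → V → C := fun X Y Z =>
  (-(1/8:ℝ)) • M.beta3J X Y Z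
    + (1/48:ℝ) • ((3:ℝ) • (M.beta3I X Y Z + M.beta3J X Y Z + M.beta3K X Y Z)
        + calL M.J (fun a b c => M.beta3I a b c + M.beta3J a b c + M.beta3K a b c) X Y Z)

def psi3K : V → V → V → C := fun X Y Z =>
  (-(1/8:ℝ)) • M.beta3K X Y Z
    + (1/48:ℝ) • ((3:ℝ) • (M.beta3I X Y Z + M.beta3J X Y Z + M.beta3K X Y Z)
        + calL M.K (fun a b c => M.beta3I a b c + M.beta3J a b c + M.beta3K a b c) X Y Z)

/-- the three-form `ψ^{(K)}_I` determining `ξ_{K3}` -/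
def psiKI : V → V → V → C := fun X Y Z =>
  (-(1/2:ℝ)) • M.betaKI X Y Z
    + (1/6:ℝ) • (M.betaKI X Y Z + M.betaKJ X Y Z + M.betaKK X Y Z)

def psiKJ : V → V → V → C := fun X Y Z =>
  (-(1/2:ℝ)) • M.betaKJ X Y Z
    + (1/6:ℝ) • (M.betaKI X Y Z + M.betaKJ X Y Z + M.betaKK X Y Z)

def psiKK : V → V → V → C := fun X Y Z =>
  (-(1/2:ℝ)) • M.betaKK X Y Z
    + (1/6:ℝ) • (M.betaKI X Y Z + M.betaKJ X Y Z + M.betaKK X Y Z)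

/-- the one-form `θ^ξ` determining `ξ_{EH}`,
defined by `(6/n)(2n+1)(n-1) θ^ξ(X) = -⟨ξ_{e_i} e_i, X⟩` -/
def thetaXi : V → C := fun X =>
  (-((n:ℝ)/(6*(2*(n:ℝ)+1)*((n:ℝ)-1)))) • ∑ i, M.g (M.xi (M.frame i) (M.frame i)) X

/-- the local one-form `θ^ξ_I`, defined by `(2/n)(2n+1)(n-1) θ^ξ_I(X) = -⟨I ξ_{e_i} I e_i, X⟩` -/
def thetaXiI : V → C := fun X =>
  (-((n:ℝ)/(2*(2*(n:ℝ)+1)*((n:ℝ)-1)))) •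
    ∑ i, M.g (M.I (M.xi (M.frame i) (M.I (M.frame i)))) X

def thetaXiJ : V → C := fun X =>
  (-((n:ℝ)/(2*(2*(n:ℝ)+1)*((n:ℝ)-1)))) •
    ∑ i, M.g (M.J (M.xi (M.frame i) (M.J (M.frame i)))) X

def thetaXiK : V → C := fun X =>
  (-((n:ℝ)/(2*(2*(n:ℝ)+1)*((n:ℝ)-1)))) •
    ∑ i, M.g (M.K (M.xi (M.frame i) (M.K (M.frame i)))) X

/-- `α_I = -λ_I ⊗ g + (1/2)(J_(2) - J_(3)) ∇ω_K` -/
def alphaI : V → V → V → C := fun X Y Z =>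
  -(M.lambdaI X * M.g Y Z)
    + (1/2:ℝ) • (-(M.nab2 (M.omega M.K) X (M.J Y) Z) + M.nab2 (M.omega M.K) X Y (M.J Z))

def alphaJ : V → V → V → C := fun X Y Z =>
  -(M.lambdaJ X * M.g Y Z)
    + (1/2:ℝ) • (-(M.nab2 (M.omega M.I) X (M.K Y) Z) + M.nab2 (M.omega M.I) X Y (M.K Z))

def alphaK : V → V → V → C := fun X Y Z =>
  -(M.lambdaK X * M.g Y Z)
    + (1/2:ℝ) • (-(M.nab2 (M.omega M.J) X (M.I Y) Z) + M.nab2 (M.omega M.J) X Y (M.I Z))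

/-- the one-form `η_I(X) = α_I(e_i; e_i, X)` -/
def etaI : V → C := fun X => ∑ i, M.alphaI (M.frame i) (M.frame i) X

def etaJ : V → C := fun X => ∑ i, M.alphaJ (M.frame i) (M.frame i) X

def etaK : V → C := fun X => ∑ i, M.alphaK (M.frame i) (M.frame i) X

/-- the fundamental four-form `Ω = Σ_A ω_A ∧ ω_A` -/
def Omega4 : V → V → V → V → C := fun X Y Z W =>
  wedge22 (M.omega M.I) (M.omega M.I) X Y Z W
    + wedge22 (M.omega M.J) (M.omega M.J) X Y Z W
    + wedge22 (M.omega M.K) (M.omega M.K) X Y Z W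

/-- the one-form `θ^{d*Ω} = (1/3) Σ_A A Λ_A d*Ω` -/
def thetaDOmega : V → C := fun X =>
  (1/3:ℝ) • (act1 M.I (M.Lam M.I (M.codiff4 M.Omega4)) X
    + act1 M.J (M.Lam M.J (M.codiff4 M.Omega4)) X
    + act1 M.K (M.Lam M.K (M.codiff4 M.Omega4)) X)

/-- the vector-valued torsion: `g(W, T(X,Y)) = T(W,X,Y)` -/
def Tvec (T : V → V → V → C) : V → V → V := fun X Y => ∑ i, T (M.frame i) X Y • M.frame i

/-- the connection `∇ + (1/2) T` associated to a torsion (0,3)-tensor `T` -/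
def nabT (T : V → V → V → C) : V → V → V := fun X Y => M.nab X Y + (1/2:ℝ) • M.Tvec T X Y

/-- a connection is metric -/
def MetricConn (nab' : V → V → V) : Prop :=
  ∀ X Y Z, M.D X (M.g Y Z) = M.g (nab' X Y) Z + M.g Y (nab' X Z)

/-- a connection is quaternionic, with associated local one-forms `γ_I, γ_J, γ_K`:
`∇'_X I = γ_K(X) J - γ_J(X) K`, and cyclically -/
def QuatConn (nab' : V → V → V) (γI γJ γK : V → C) : Prop :=
  (∀ X Y, nab' X (M.I Y) - M.I (nab' X Y) = γK X • M.J Y - γJ X • M.K Y) ∧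
  (∀ X Y, nab' X (M.J Y) - M.J (nab' X Y) = γI X • M.K Y - γK X • M.I Y) ∧
  (∀ X Y, nab' X (M.K Y) - M.K (nab' X Y) = γJ X • M.I Y - γI X • M.J Y)

/-- the HKT condition: `I, J, K` integrable and there is a metric connection
`∇ + (1/2)T` with totally skew torsion making `I, J, K` parallel -/
def IsHKT : Prop :=
  (∀ X Y, M.nijV M.I X Y = 0) ∧ (∀ X Y, M.nijV M.J X Y = 0) ∧
  (∀ X Y, M.nijV M.K X Y = 0) ∧
  ∃ T : V → V → V → C, IsAlt3 T ∧ Lin3 T ∧ M.MetricConn (M.nabT T) ∧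
    (∀ X Y, M.nabT T X (M.I Y) = M.I (M.nabT T X Y)) ∧
    (∀ X Y, M.nabT T X (M.J Y) = M.J (M.nabT T X Y)) ∧
    (∀ X Y, M.nabT T X (M.K Y) = M.K (M.nabT T X Y))

/-- membership of a three-form in `KH`: type `{2,1}` for each `A` and `Λ_A ψ = 0` -/
def InKH3 (ψ : V → V → V → C) : Prop :=
  IsAlt3 ψ ∧ Lin3 ψ ∧
  calL M.I ψ = ψ ∧ calL M.J ψ = ψ ∧ calL M.K ψ = ψ ∧
  M.Lam M.I ψ = 0 ∧ M.Lam M.J ψ = 0 ∧ M.Lam M.K ψ = 0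

/-- the `(0,3)`-tensor of the `KH`-component of the torsion determined by `ψ^{(K)}`:
`3ψ - Σ_A A_(23) ψ` -/
def xiKH3 (ψ : V → V → V → C) : V → V → V → C := fun X Y Z =>
  (3:ℝ) • ψ X Y Z - (op23 M.I ψ X Y Z + op23 M.J ψ X Y Z + op23 M.K ψ X Y Z)

/-- the `(0,3)`-tensor of the `EH`-component of the torsion determined by the
one-form `θ`: `3 e_i ⊗ e_i ∧ θ - Σ_A (e_i ⊗ A e_i ∧ A θ + (2/n) A θ ⊗ ω_A)` -/
def xiEH3 (θ : V → C) : V → V → V → C := fun X Y Z =>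
  (3:ℝ) • ∑ i, M.g (M.frame i) X *
      (M.g (M.frame i) Y * θ Z - M.g (M.frame i) Z * θ Y)
  - ((∑ i, M.g (M.frame i) X *
        (M.g (M.I (M.frame i)) Y * act1 M.I θ Z - M.g (M.I (M.frame i)) Z * act1 M.I θ Y))
    + (∑ i, M.g (M.frame i) X *
        (M.g (M.J (M.frame i)) Y * act1 M.J θ Z - M.g (M.J (M.frame i)) Z * act1 M.J θ Y))
    + (∑ i, M.g (M.frame i) X *
        (M.g (M.K (M.frame i)) Y * act1 M.K θ Z - M.g (M.K (M.frame i)) Z * act1 M.K θ Y)))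
  - (2/(n:ℝ)) • (act1 M.I θ X * M.omega M.I Y Z + act1 M.J θ X * M.omega M.J Y Z
      + act1 M.K θ X * M.omega M.K Y Z)

/-- the intrinsic torsion lies in `(K+E)H`: it is the sum of a `KH`-tensor and an
`EH`-tensor as described in §3 of the paper -/
def inKEH : Prop :=
  ∃ (ψ : V → V → V → C) (θ : V → C), M.InKH3 ψ ∧ Lin1 θ ∧
    ∀ X Y Z, M.g Y (M.xi X Z) = M.xiKH3 ψ X Y Z + M.xiEH3 θ X Y Z

end derived

end AQH

/-!
Twisting the Levi-Civita connection by one-forms `γ_A` gives a metric connection `N`, and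
`∇ + T/2` is quaternionic with connection forms `γ_A` if and only if `I`, `J`, `K` are parallel for
`N + T/2`. Together with `𝓛_A T = T` this forces `T = A (d^N ω_A)` for `A = I, J, K`, where
`d^N ω_A` is the cyclic sum of `N ω_A`. Conversely, if the three forms `A (d^N ω_A)` are one and
the same `T`, the quaternion relations express the Nijenhuis tensors through the failure of `T` to
satisfy `𝓛_A T = T`; comparing with the cyclic sums of the Nijenhuis tensors shows that this failure
lies in the `-1`-eigenspace of some other `𝓛_B`, which is zero. As `A (d^N ω_A)` is `A dω_A` plus
wedge products, the equality of the three forms is the system of equations for the `β_A`.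

A form with `𝓛_A T = T` is `-8 (ψ + Σ_A Aθ ∧ ω_A)` with `Λ_A ψ = 0`. Projecting it to the
complement of `sp(n)` in the last two arguments gives the torsions `ξ` in `(K + E)H`, once the
one-forms are matched by `γ_A = λ_A + (8 + 4/n) Aθ`. The formulas for `γ_A` are the contractions of
`dω_I` with `ω_I`, `ω_J`, `ω_K`, as the three contractions of `T` determine each other.
-/

namespace AQH

section Scalars

variable {C : Type*} [CommRing C] [Algebra ℝ C]

theorem natCast_mul_left_cancel {m : ℕ} (hm : m ≠ 0) {a b : C} (h : (m : C) * a = m * b) :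
    a = b := by
  have isUnit_natCast : IsUnit (m : C) := by
    simpa using (IsUnit.mk0 (m : ℝ) (Nat.cast_ne_zero.2 hm)).map (algebraMap ℝ C)
  exact isUnit_natCast.mul_left_cancel h

theorem two_mul_left_cancel {a b : C} (h : 2 * a = 2 * b) : a = b :=
  natCast_mul_left_cancel two_ne_zero (by exact_mod_cast h)

theorem two_mul_algebraMap_half : 2 * algebraMap ℝ C (1 / 2) = 1 := by
  rw [← map_ofNat (algebraMap ℝ C) 2, ← map_mul]
  norm_num

theorem natCast_mul_algebraMap_inv {m : ℕ} (hm : m ≠ 0) :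
    (m : C) * algebraMap ℝ C (m : ℝ)⁻¹ = 1 := by
  rw [← map_natCast (algebraMap ℝ C) m, ← map_mul, mul_inv_cancel₀ (Nat.cast_ne_zero.2 hm), map_one]

end Scalars

section Forms

variable {C V : Type*} [CommRing C]

theorem calL_add (A : V → V) (T S : V → V → V → C) : calL A (T + S) = calL A T + calL A S := by
  funext X Y Z
  simp only [calL, op12, op13, op23, Pi.add_apply]
  ring

theorem calL_smul (A : V → V) (c : C) (T : V → V → V → C) : calL A (c • T) = c • calL A T := by
  funext X Y Z
  simp only [calL, op12, op13, op23, Pi.smul_apply, smul_eq_mul]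
  ring

variable [AddCommGroup V] [Module C V]

theorem isLinearMap_of_map_smul_add {W : Type*} [AddCommGroup W] [Module C W] {A : V → W}
    (hA : ∀ (f : C) X Y, A (f • X + Y) = f • A X + A Y) : IsLinearMap C A := by
  have map_zero : A 0 = 0 := by simpa using hA 1 0 0
  exact ⟨fun X Y => by simpa using hA 1 X Y, fun f X => by simpa [map_zero] using hA f X 0⟩

theorem Lin1.isLinearMap {ν : V → C} (hν : Lin1 ν) : IsLinearMap C ν :=
  isLinearMap_of_map_smul_add hν

theorem lin1_of_isLinearMap {ν : V → C} (hν : IsLinearMap C ν) : Lin1 ν := fun f X X' => by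
  rw [hν.map_add, hν.map_smul, smul_eq_mul]

theorem Lin1.comp {ν : V → C} {A : V → V} (hν : Lin1 ν) (hA : IsLinearMap C A) :
    Lin1 (fun X => ν (A X)) :=
  lin1_of_isLinearMap (hν.isLinearMap.mk'.comp hA.mk').isLinear

theorem Lin1.act1 {ν : V → C} {A : V → V} (hν : Lin1 ν) (hA : IsLinearMap C A) :
    Lin1 (act1 A ν) := fun f X X' => by
  simp only [AQH.act1, hA.map_add, hA.map_smul, hν f]
  ring

theorem Lin1.map_sum {ν : V → C} (hν : Lin1 ν) {ι : Type*} (s : Finset ι) (x : ι → V) :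
    ν (∑ i ∈ s, x i) = ∑ i ∈ s, ν (x i) :=
  _root_.map_sum (IsLinearMap.mk' ν hν.isLinearMap) x s

/-- Three-forms: alternating `(0,3)`-tensors. -/
structure IsForm3 (T : V → V → V → C) : Prop where
  alt : IsAlt3 T
  lin : Lin3 T

namespace IsForm3

variable {T S : V → V → V → C}

theorem cyclic (hT : IsForm3 T) (X Y Z : V) : T Y Z X = T X Y Z := by
  rw [hT.alt.2, hT.alt.1, neg_neg]

theorem lin1_left (hT : IsForm3 T) (Y Z : V) : Lin1 (fun X => T X Y Z) :=
  fun f X X' => hT.lin f X X' Y Z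

theorem lin1_mid (hT : IsForm3 T) (X Z : V) : Lin1 (fun Y => T X Y Z) := fun f Y Y' => by
  have lin := hT.lin f Y Y' Z X
  rwa [hT.cyclic X, hT.cyclic X, hT.cyclic X] at lin

theorem lin1_right (hT : IsForm3 T) (X Y : V) : Lin1 (T X Y) := fun f Z Z' => by
  simp only [fun Z => hT.cyclic Z X Y, hT.lin f Z Z']

theorem map_neg (hT : IsForm3 T) :
    (∀ X Y Z, T (-X) Y Z = -T X Y Z) ∧ (∀ X Y Z, T X (-Y) Z = -T X Y Z) ∧
      ∀ X Y Z, T X Y (-Z) = -T X Y Z :=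
  ⟨fun X Y Z => (hT.lin1_left Y Z).isLinearMap.map_neg X,
    fun X Y Z => (hT.lin1_mid X Z).isLinearMap.map_neg Y,
    fun X Y => (hT.lin1_right X Y).isLinearMap.map_neg⟩

theorem add (hT : IsForm3 T) (hS : IsForm3 S) : IsForm3 (T + S) where
  alt := ⟨fun X Y Z => by simp only [Pi.add_apply, hT.alt.1 X, hS.alt.1 X, neg_add],
    fun X Y Z => by simp only [Pi.add_apply, hT.alt.2 X Y, hS.alt.2 X Y, neg_add]⟩
  lin f X X' Y Z := by
    simp only [Pi.add_apply, hT.lin f X, hS.lin f X]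
    ring

theorem smul (hT : IsForm3 T) (c : C) : IsForm3 (c • T) where
  alt := ⟨fun X Y Z => by simp only [Pi.smul_apply, hT.alt.1 X, smul_neg],
    fun X Y Z => by simp only [Pi.smul_apply, hT.alt.2 X Y, smul_neg]⟩
  lin f X X' Y Z := by
    simp only [Pi.smul_apply, hT.lin f X, smul_eq_mul]
    ring

theorem act3 (hT : IsForm3 T) {A : V → V} (hA : IsLinearMap C A) : IsForm3 (act3 A T) where
  alt := ⟨fun X Y Z => congrArg Neg.neg (hT.alt.1 (A X) (A Y) (A Z)),
    fun X Y Z => congrArg Neg.neg (hT.alt.2 (A X) (A Y) (A Z))⟩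
  lin f X X' Y Z := by
    simp only [AQH.act3, hA.map_add, hA.map_smul, hT.lin f]
    ring

end IsForm3

theorem eq_act3_iff {T S : V → V → V → C} (hT : IsForm3 T) (hS : IsForm3 S) {A : V → V}
    (hA : ∀ X, A (A X) = -X) :
    T = act3 A S ↔ ∀ X Y Z, S X Y Z = T (A X) (A Y) (A Z) := by
  constructor
  · rintro rfl X Y Z
    simp only [act3, hA, hS.map_neg, neg_neg]
  · intro eq
    funext X Y Z
    simp only [act3, eq, hA, hT.map_neg, neg_neg]

/-- The defect of a three-form from having type `(2,1) + (1,2)` with respect to an almost complex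
structure `A`, as a three-form: see `typeDefect_map_left`. -/
def typeDefect (A : V → V) (T : V → V → V → C) : V → V → V → C := fun X Y Z =>
  T (A X) Y Z + T X (A Y) Z + T X Y (A Z) - T (A X) (A Y) (A Z)

theorem IsForm3.typeDefect {T : V → V → V → C} (hT : IsForm3 T) {A : V → V}
    (hA : IsLinearMap C A) : IsForm3 (typeDefect A T) where
  alt := by
    obtain ⟨swap12, swap23⟩ := hT.alt
    constructor <;> intro X Y Z <;> simp only [AQH.typeDefect]
    · linear_combination swap12 (A X) Y Z + swap12 X (A Y) Z + swap12 X Y (A Z)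
        - swap12 (A X) (A Y) (A Z)
    · linear_combination swap23 (A X) Y Z + swap23 X (A Y) Z + swap23 X Y (A Z)
        - swap23 (A X) (A Y) (A Z)
  lin f X X' Y Z := by
    simp only [AQH.typeDefect, hA.map_add, hA.map_smul, hT.lin f]
    ring

theorem typeDefect_map_left {T : V → V → V → C} (hT : IsForm3 T) {A : V → V}
    (hA : ∀ X, A (A X) = -X) (X Y Z : V) :
    typeDefect A T (A X) Y Z = calL A T X Y Z - T X Y Z := by
  simp only [typeDefect, calL, op12, op13, op23, hA, hT.map_neg]
  ring

theorem typeDefect_eq_zero_iff {T : V → V → V → C} (hT : IsForm3 T) {A : V → V}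
    (hA : ∀ X, A (A X) = -X) : typeDefect A T = 0 ↔ calL A T = T := by
  constructor <;> intro eq <;> funext X Y Z
  · have map_left := typeDefect_map_left hT hA X Y Z
    rw [eq] at map_left
    exact sub_eq_zero.1 map_left.symm
  · have fixed := congr_fun₃ eq (A X) Y Z
    simp only [calL, op12, op13, op23, hA, hT.map_neg] at fixed
    simp only [typeDefect, Pi.zero_apply]
    linear_combination -fixed

theorem calL_calL {Q : V → V → V → C} (hQ : IsForm3 Q) {A : V → V} (hA : ∀ X, A (A X) = -X)
    (X Y Z : V) : calL A (calL A Q) X Y Z = 3 * Q X Y Z - 2 * calL A Q X Y Z := by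
  simp only [calL, op12, op13, op23, hA, hQ.map_neg]
  ring

/-- The eigenvalues of `𝓛_A` are `1` and `-3`. -/
theorem eq_zero_of_calL_eq_neg [Algebra ℝ C] {Q : V → V → V → C} (hQ : IsForm3 Q) {A : V → V}
    (hA : ∀ X, A (A X) = -X) (eigen : calL A Q = -Q) : Q = 0 := by
  funext X Y Z
  have square := calL_calL hQ hA X Y Z
  have linear : calL A (-Q) X Y Z = -calL A Q X Y Z := by
    simp only [calL, op12, op13, op23, Pi.neg_apply]
    ring
  rw [eigen, linear, eigen] at square
  refine natCast_mul_left_cancel four_ne_zero ?_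
  simp only [Pi.neg_apply, Pi.zero_apply] at square ⊢
  push_cast
  linear_combination -square

/-- Three-forms satisfying the algebraic condition `𝓛_A T = T`, for `A = I, J, K`, on the torsion
of a QKT connection. -/
structure IsQKTForm (I J K : V → V) (T : V → V → V → C) : Prop where
  isForm3 : IsForm3 T
  calL_I : calL I T = T
  calL_J : calL J T = T
  calL_K : calL K T = T

namespace IsQKTForm

variable {I J K : V → V} {T S : V → V → V → C}

theorem rotate (hT : IsQKTForm I J K T) : IsQKTForm J K I T :=
  ⟨hT.isForm3, hT.calL_J, hT.calL_K, hT.calL_I⟩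

theorem add (hT : IsQKTForm I J K T) (hS : IsQKTForm I J K S) : IsQKTForm I J K (T + S) where
  isForm3 := hT.isForm3.add hS.isForm3
  calL_I := by rw [calL_add, hT.calL_I, hS.calL_I]
  calL_J := by rw [calL_add, hT.calL_J, hS.calL_J]
  calL_K := by rw [calL_add, hT.calL_K, hS.calL_K]

theorem smul (hT : IsQKTForm I J K T) (c : C) : IsQKTForm I J K (c • T) where
  isForm3 := hT.isForm3.smul c
  calL_I := by rw [calL_smul, hT.calL_I]
  calL_J := by rw [calL_smul, hT.calL_J]
  calL_K := by rw [calL_smul, hT.calL_K]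

end IsQKTForm

/-- The cyclic sum of a `(0,3)`-tensor over its three arguments. -/
def cycSum (t : V → V → V → C) : V → V → V → C := fun X Y Z => t X Y Z + t Y Z X + t Z X Y

theorem isForm3_cycSum {t : V → V → V → C} (skew : ∀ X Y Z, t X Z Y = -t X Y Z)
    (lin_left : ∀ Y Z, Lin1 (fun X => t X Y Z)) (lin_right : ∀ X Y, Lin1 (t X Y)) :
    IsForm3 (cycSum t) where
  alt := by
    constructor <;> intro X Y Z <;> simp only [cycSum] <;>
      linear_combination skew X Y Z + skew Y Z X + skew Z X Y
  lin f X X' Y Z := by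
    simp only [cycSum]
    linear_combination lin_left Y Z f X X' + lin_right Y Z f X X'
      + skew Z Y (f • X + X') - f * skew Z Y X - skew Z Y X' - lin_right Z Y f X X'

end Forms

section Metric

variable {n : ℕ} {C V : Type*} [CommRing C] [Algebra ℝ C] [AddCommGroup V] [Module C V]
variable (M : AQH n C V)

theorem isLinearMap_g (X : V) : IsLinearMap C (M.g X) where
  map_add Y Z := by rw [M.g_symm, M.g_add, M.g_symm Y, M.g_symm Z]
  map_smul f Y := by rw [M.g_symm, M.g_smul, M.g_symm Y, smul_eq_mul]

theorem lin1_g (X : V) : Lin1 (M.g X) := lin1_of_isLinearMap (M.isLinearMap_g X)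

theorem g_smul_right (f : C) (X Y : V) : M.g X (f • Y) = f * M.g X Y :=
  (M.isLinearMap_g X).map_smul f Y

theorem sum_g_frame_mul {ν : V → C} (hν : Lin1 ν) (X : V) :
    ∑ i, M.g X (M.frame i) * ν (M.frame i) = ν X := by
  conv_rhs => rw [M.frame_span X, hν.map_sum]
  simp only [hν.isLinearMap.map_smul, smul_eq_mul]

theorem sum_g_frame_self : ∑ i, M.g (M.frame i) (M.frame i) = (4 * n : C) := by
  simp [M.frame_orthonormal]

theorem ext_g {X Y : V} (h : ∀ W, M.g W X = M.g W Y) : X = Y := by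
  rw [M.frame_span X, M.frame_span Y]
  exact Finset.sum_congr rfl fun i _ => by rw [M.g_symm X, M.g_symm Y, h]

/-- Orthogonal almost complex structures on `M`. -/
structure IsHermitian (A : V → V) : Prop where
  isLinearMap : IsLinearMap C A
  sq : ∀ X, A (A X) = -X
  isometry : ∀ X Y, M.g (A X) (A Y) = M.g X Y

variable {M}

namespace IsHermitian

variable {A : V → V}

theorem g_left (hA : M.IsHermitian A) (X Y : V) : M.g (A X) Y = -M.g X (A Y) := by
  rw [← hA.isometry X, hA.sq, (M.isLinearMap_g _).map_neg, neg_neg]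

theorem g_self (hA : M.IsHermitian A) (X : V) : M.g X (A X) = 0 :=
  two_mul_left_cancel (by linear_combination M.g_symm X (A X) + hA.g_left X X)

theorem omega_skew (hA : M.IsHermitian A) (X Y : V) : M.omega A X Y = -M.omega A Y X := by
  simp only [omega, M.g_symm X (A Y), hA.g_left]

theorem isForm3_wedge12 (hA : M.IsHermitian A) {ν : V → C} (hν : Lin1 ν) :
    IsForm3 (wedge12 ν (M.omega A)) where
  alt := by
    constructor <;> intro X Y Z <;> simp only [wedge12]
    · linear_combination ν Z * hA.omega_skew Y X
    · linear_combination ν X * hA.omega_skew Z Y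
  lin f X X' Y Z := by
    simp only [wedge12, omega, hν f, M.g_add, M.g_smul]
    ring

end IsHermitian

variable (M) in
/-- Adapted bases: `I, J, K` are anticommuting orthogonal almost complex structures, `K = IJ`. -/
structure IsAdapted (I J K : V → V) : Prop where
  hermI : M.IsHermitian I
  hermJ : M.IsHermitian J
  hermK : M.IsHermitian K
  mul : ∀ X, I (J X) = K X
  mul_rev : ∀ X, J (I X) = -K X

namespace IsAdapted

variable {I J K : V → V}

theorem rotate (h : M.IsAdapted I J K) : M.IsAdapted J K I where
  hermI := h.hermJ
  hermJ := h.hermK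
  hermK := h.hermI
  mul X := by
    rw [← h.mul, h.mul_rev, ← h.mul, h.hermJ.sq, h.hermI.isLinearMap.map_neg, neg_neg]
  mul_rev X := by rw [← h.mul, h.hermJ.sq, h.hermI.isLinearMap.map_neg]

theorem mul_table (h : M.IsAdapted I J K) :
    ((∀ X, I (I X) = -X) ∧ (∀ X, J (J X) = -X) ∧ ∀ X, K (K X) = -X) ∧
    ((∀ X, I (J X) = K X) ∧ (∀ X, J (K X) = I X) ∧ ∀ X, K (I X) = J X) ∧
    (∀ X, J (I X) = -K X) ∧ (∀ X, K (J X) = -I X) ∧ ∀ X, I (K X) = -J X :=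
  ⟨⟨h.hermI.sq, h.hermJ.sq, h.hermK.sq⟩, ⟨h.mul, h.rotate.mul, h.rotate.rotate.mul⟩,
    h.mul_rev, h.rotate.mul_rev, h.rotate.rotate.mul_rev⟩

theorem map_neg (h : M.IsAdapted I J K) :
    (∀ X, I (-X) = -I X) ∧ (∀ X, J (-X) = -J X) ∧ ∀ X, K (-X) = -K X :=
  ⟨h.hermI.isLinearMap.map_neg, h.hermJ.isLinearMap.map_neg, h.hermK.isLinearMap.map_neg⟩

end IsAdapted

variable (M) in
theorem isAdapted : M.IsAdapted M.I M.J M.K := by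
  have hermI : M.IsHermitian M.I := ⟨isLinearMap_of_map_smul_add M.I_lin, M.I_sq, M.I_metric⟩
  have hermJ : M.IsHermitian M.J := ⟨isLinearMap_of_map_smul_add M.J_lin, M.J_sq, M.J_metric⟩
  have mul_rev (X : V) : M.J (M.I X) = -M.K X := by rw [M.K_def, M.anticomm, neg_neg]
  have hermK : M.IsHermitian M.K := {
    isLinearMap := isLinearMap_of_map_smul_add M.K_lin
    sq X := by
      rw [M.K_def, M.K_def, M.anticomm, M.I_sq, hermJ.isLinearMap.map_neg,
        neg_neg, M.J_sq]
    isometry X Y := by rw [M.K_def, M.K_def, M.I_metric, M.J_metric] }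
  exact ⟨hermI, hermJ, hermK, fun X => (M.K_def X).symm, mul_rev⟩

end Metric

section Connections

variable {n : ℕ} {C V : Type*} [CommRing C] [Algebra ℝ C] [AddCommGroup V] [Module C V]
variable {M : AQH n C V} {N : V → V → V} {A I J K : V → V}

variable (M) in
/-- Metric connections on `M`, the directional derivative being that of `M`. -/
structure IsMetricConnection (N : V → V → V) : Prop where
  metric : M.MetricConn N
  isLinearMap : ∀ Y, IsLinearMap C (fun X => N X Y)

variable (M) in
theorem isMetricConnection_nab : M.IsMetricConnection M.nab where
  metric := M.nab_metric
  isLinearMap Y := ⟨fun X X' => M.nab_addX X X' Y, fun f X => M.nab_smulX f X Y⟩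

variable (M) in
/-- The covariant derivative `(N_X ω_A)(Y, Z)` of a Kähler form, written as `g(Y, (N_X A) Z)`,
to which it is equal for a metric connection `N`. -/
def covOmega (N : V → V → V) (A : V → V) : V → V → V → C :=
  fun X Y Z => M.g Y (N X (A Z) - A (N X Z))

theorem lin1_covOmega_mid (X Z : V) : Lin1 (fun Y => M.covOmega N A X Y Z) := fun f Y Y' => by
  simp only [covOmega, M.g_add, M.g_smul]

theorem covOmega_mul (h : M.IsAdapted I J K) (X Y Z : V) :
    M.covOmega N K X Y Z = M.covOmega N I X Y (J Z) - M.covOmega N J X (I Y) Z := by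
  simp only [covOmega, (M.isLinearMap_g _).map_sub, h.hermI.g_left, h.mul_table]
  ring

theorem D_neg (X : V) (f : C) : M.D X (-f) = -M.D X f := by
  have leibniz := M.D_mul X (algebraMap ℝ C (-1)) f
  rw [M.D_const] at leibniz
  simpa using leibniz

namespace IsMetricConnection

theorem apply_neg (hN : M.IsMetricConnection N) (X Y : V) : N X (-Y) = -N X Y := M.ext_g fun W => by
  have metric := hN.metric X W (-Y)
  simp only [(M.isLinearMap_g _).map_neg, D_neg] at metric ⊢
  linear_combination -hN.metric X W Y - metric

theorem covOmega_eq (hN : M.IsMetricConnection N) (hA : M.IsHermitian A) (X Y Z : V) :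
    M.covOmega N A X Y Z
      = M.D X (M.omega A Y Z) - M.omega A (N X Y) Z + M.omega A (N X Z) Y := by
  simp only [covOmega, omega, (M.isLinearMap_g _).map_sub]
  linear_combination -hN.metric X Y (A Z) - M.g_symm Y (A (N X Z)) - hA.g_left (N X Z) Y

theorem covOmega_skew (hN : M.IsMetricConnection N) (hA : M.IsHermitian A) (X Y Z : V) :
    M.covOmega N A X Z Y = -M.covOmega N A X Y Z := by
  rw [hN.covOmega_eq hA, hN.covOmega_eq hA, hA.omega_skew, D_neg]
  ring

theorem lin1_covOmega_left (hN : M.IsMetricConnection N) (hA : IsLinearMap C A) (Y Z : V) :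
    Lin1 (fun X => M.covOmega N A X Y Z) := fun f X X' => by
  simp only [covOmega, (M.isLinearMap_g _).map_sub, (hN.isLinearMap _).map_add,
    (hN.isLinearMap _).map_smul, hA.map_add, hA.map_smul, (M.isLinearMap_g _).map_add,
    M.g_smul_right]
  ring

theorem lin1_covOmega_right (hN : M.IsMetricConnection N) (hA : M.IsHermitian A) (X Y : V) :
    Lin1 (M.covOmega N A X Y) := fun f Z Z' => by
  simp only [hN.covOmega_skew hA X _ Y]
  linear_combination -lin1_covOmega_mid X Y f Z Z'

theorem covOmega_map_map (hN : M.IsMetricConnection N) (hA : M.IsHermitian A) (X Y Z : V) :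
    M.covOmega N A X (A Y) (A Z) = -M.covOmega N A X Y Z := by
  simp only [covOmega, hA.sq, hN.apply_neg, hA.g_left, (M.isLinearMap_g _).map_sub,
    hA.isLinearMap.map_sub, hA.isLinearMap.map_neg, (M.isLinearMap_g _).map_neg]
  ring

theorem covOmega_map_neg (hN : M.IsMetricConnection N) (hA : M.IsHermitian A) :
    (∀ X Y Z, M.covOmega N A (-X) Y Z = -M.covOmega N A X Y Z) ∧
    (∀ X Y Z, M.covOmega N A X (-Y) Z = -M.covOmega N A X Y Z) ∧
      ∀ X Y Z, M.covOmega N A X Y (-Z) = -M.covOmega N A X Y Z :=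
  ⟨fun X Y Z => (hN.lin1_covOmega_left hA.isLinearMap Y Z).isLinearMap.map_neg X,
    fun X Y Z => (lin1_covOmega_mid (M := M) (N := N) (A := A) X Z).isLinearMap.map_neg Y,
    fun X Y => (hN.lin1_covOmega_right hA X Y).isLinearMap.map_neg⟩

theorem isForm3_cycSum_covOmega (hN : M.IsMetricConnection N) (hA : M.IsHermitian A) :
    IsForm3 (cycSum (M.covOmega N A)) :=
  isForm3_cycSum (hN.covOmega_skew hA) (hN.lin1_covOmega_left hA.isLinearMap)
    (hN.lin1_covOmega_right hA)

end IsMetricConnection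

theorem d2_omega_eq_cycSum (hA : M.IsHermitian A) :
    M.d2 (M.omega A) = cycSum (M.covOmega M.nab A) := by
  funext X Y Z
  have omega_sub (X X' Y : V) : M.omega A (X - X') Y = M.omega A X Y - M.omega A X' Y := by
    simp only [omega, M.g_symm _ (A Y), (M.isLinearMap_g _).map_sub]
  simp only [d2, cycSum, M.isMetricConnection_nab.covOmega_eq hA, ← M.torsion_free, omega_sub]
  rw [hA.omega_skew Z X, D_neg]
  ring

variable (M) in
/-- A `(0,3)`-tensor measuring the integrability of `A`: for the Levi-Civita connection `N` it is
`g(A Z, N_A(X, Y))` with `N_A` the Nijenhuis tensor. -/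
def nijenhuis (N : V → V → V) (A : V → V) : V → V → V → C := fun X Y Z =>
  M.covOmega N A (A X) (A Y) Z - M.covOmega N A X Y Z
    - (M.covOmega N A (A Y) (A X) Z - M.covOmega N A Y X Z)

namespace IsMetricConnection

theorem cycSum_nijenhuis (hN : M.IsMetricConnection N) (hA : M.IsHermitian A) (X Y Z : V) :
    cycSum (M.nijenhuis N A) X Y Z
      = calL A (cycSum (M.covOmega N A)) X Y Z - cycSum (M.covOmega N A) X Y Z := by
  have skew := hN.covOmega_skew hA
  have map_map := hN.covOmega_map_map hA
  simp only [cycSum, nijenhuis, calL, op12, op13, op23]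
  linear_combination skew X Y Z + skew Y Z X + skew Z X Y - skew (A Z) X (A Y) - skew (A Y) Z (A X)
    - skew (A X) Y (A Z) - map_map X Y Z - map_map Y Z X - map_map Z X Y

theorem two_mul_covOmega (hN : M.IsMetricConnection N) (hA : M.IsHermitian A) (X Y Z : V) :
    2 * M.covOmega N A X Y Z
      = cycSum (M.covOmega N A) X Y Z - cycSum (M.covOmega N A) X (A Y) (A Z)
        + M.nijenhuis N A Y Z X := by
  have skew := hN.covOmega_skew hA
  simp only [cycSum, nijenhuis]
  linear_combination hN.covOmega_map_map hA X Y Z - skew Z Y X + skew (A Z) (A Y) X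

theorem nijenhuis_quaternionic (hN : M.IsMetricConnection N) (h : M.IsAdapted I J K) (X Y Z : V) :
    M.nijenhuis N I X Y (K Z)
      = cycSum (M.covOmega N J) X Y Z - cycSum (M.covOmega N J) (I X) (I Y) Z
        - cycSum (M.covOmega N K) (I X) Y Z - cycSum (M.covOmega N K) X (I Y) Z := by
  have skewI := hN.covOmega_skew h.hermI
  have right (W X Y : V) :
      M.covOmega N K W X (I Y) = M.covOmega N J W X Y + M.covOmega N I W (K X) Y := by
    rw [covOmega_mul h.rotate.rotate]
    ring
  have mid (W X Y : V) :
      M.covOmega N K W (I X) Y = M.covOmega N J W X Y + M.covOmega N I W X (K Y) := by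
    linear_combination hN.covOmega_skew h.hermK W Y (I X) - right W Y X
      - hN.covOmega_skew h.hermJ W X Y - skewI W X (K Y)
  have mid_XY := mid X Y Z
  have right_YZ := right Y Z X
  have mid_IXIY := mid (I X) (I Y) Z
  have right_IYZ := right (I Y) Z (I X)
  have right_ZX := right Z X Y
  have right_ZIX := right Z (I X) (I Y)
  have map_map := hN.covOmega_map_map h.hermI Z (J X) (I Y)
  simp only [h.mul_table, hN.covOmega_map_neg h.hermI, hN.covOmega_map_neg h.hermK]
    at mid_XY right_YZ mid_IXIY right_IYZ right_ZX right_ZIX map_map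
  simp only [nijenhuis, cycSum]
  linear_combination mid_XY + right_YZ - mid_IXIY - right_IYZ + right_ZX - right_ZIX - map_map
    + skewI Y X (K Z) - skewI (I Y) (I X) (K Z)

end IsMetricConnection

variable {T : V → V → V → C}

variable (M) in
/-- The condition that `A` is parallel for the connection `N + T/2` with skew torsion `T`, where
`g(W, T(X, Y)) = T(W, X, Y)`. -/
def TorsionParallel (N : V → V → V) (T : V → V → V → C) (A : V → V) : Prop :=
  ∀ X Y Z, 2 * M.covOmega N A X Y Z = T X Y (A Z) + T X (A Y) Z

theorem TorsionParallel.cycSum_covOmega_eq (parallel : M.TorsionParallel N T A) (hT : IsForm3 T)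
    (hA : ∀ X, A (A X) = -X) (calL_eq : calL A T = T) (X Y Z : V) :
    cycSum (M.covOmega N A) X Y Z = T (A X) (A Y) (A Z) := by
  have noDefect : typeDefect A T X Y Z = 0 :=
    congr_fun₃ ((typeDefect_eq_zero_iff hT hA).2 calL_eq) X Y Z
  refine two_mul_left_cancel ?_
  simp only [cycSum, typeDefect] at noDefect ⊢
  linear_combination parallel X Y Z + parallel Y Z X + parallel Z X Y + 2 * noDefect
    + hT.cyclic X Y (A Z) - hT.cyclic Z X (A Y) - hT.cyclic Z (A X) Y + hT.cyclic (A X) Y Z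

namespace IsMetricConnection

theorem nijenhuis_eq_neg_typeDefect (hN : M.IsMetricConnection N) (h : M.IsAdapted I J K)
    (hT : IsForm3 T)
    (dJ : ∀ X Y Z, cycSum (M.covOmega N J) X Y Z = T (J X) (J Y) (J Z))
    (dK : ∀ X Y Z, cycSum (M.covOmega N K) X Y Z = T (K X) (K Y) (K Z)) (X Y Z : V) :
    M.nijenhuis N I X Y Z = -typeDefect I T (J X) (J Y) Z := by
  have quaternionic := hN.nijenhuis_quaternionic h X Y (K Z)
  simp only [dJ, dK, h.mul_table] at quaternionic
  have nijenhuis_neg : M.nijenhuis N I X Y (-Z) = -M.nijenhuis N I X Y Z := by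
    simp only [nijenhuis, hN.covOmega_map_neg h.hermI]
    ring
  rw [nijenhuis_neg] at quaternionic
  simp only [typeDefect, h.mul_table, hT.map_neg] at quaternionic ⊢
  linear_combination -quaternionic

/-- By `nijenhuis_eq_neg_typeDefect` and `cycSum_nijenhuis` the type defect `Q` of `T` satisfies
`𝓛_J Q = -Q`, but `-1` is not an eigenvalue of `𝓛_J`. -/
theorem typeDefect_eq_zero (hN : M.IsMetricConnection N) (h : M.IsAdapted I J K)
    (hT : IsForm3 T)
    (dI : ∀ X Y Z, cycSum (M.covOmega N I) X Y Z = T (I X) (I Y) (I Z))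
    (dJ : ∀ X Y Z, cycSum (M.covOmega N J) X Y Z = T (J X) (J Y) (J Z))
    (dK : ∀ X Y Z, cycSum (M.covOmega N K) X Y Z = T (K X) (K Y) (K Z)) :
    typeDefect I T = 0 := by
  have hQ := hT.typeDefect h.hermI.isLinearMap
  refine eq_zero_of_calL_eq_neg hQ h.hermJ.sq (funext₃ fun X Y Z => ?_)
  have cyclic : M.nijenhuis N I X Y Z + M.nijenhuis N I Y Z X + M.nijenhuis N I Z X Y
      = typeDefect I T X Y Z := by
    refine (hN.cycSum_nijenhuis h.hermI X Y Z).trans ?_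
    simp only [calL, op12, op13, op23, dI, h.mul_table, hT.map_neg, typeDefect]
    ring
  simp only [hN.nijenhuis_eq_neg_typeDefect h hT dJ dK] at cyclic
  simp only [calL, op12, op13, op23, Pi.neg_apply]
  linear_combination -cyclic - hQ.cyclic X (J Y) (J Z) + hQ.cyclic (J Z) (J X) Y

theorem calL_eq_and_torsionParallel (hN : M.IsMetricConnection N) (h : M.IsAdapted I J K)
    (hT : IsForm3 T)
    (dI : ∀ X Y Z, cycSum (M.covOmega N I) X Y Z = T (I X) (I Y) (I Z))
    (dJ : ∀ X Y Z, cycSum (M.covOmega N J) X Y Z = T (J X) (J Y) (J Z))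
    (dK : ∀ X Y Z, cycSum (M.covOmega N K) X Y Z = T (K X) (K Y) (K Z)) :
    calL I T = T ∧ M.TorsionParallel N T I := by
  have noDefect := hN.typeDefect_eq_zero h hT dI dJ dK
  refine ⟨(typeDefect_eq_zero_iff hT h.hermI.sq).1 noDefect, fun X Y Z => ?_⟩
  have integrable : M.nijenhuis N I Y Z X = 0 := by
    rw [hN.nijenhuis_eq_neg_typeDefect h hT dJ dK, noDefect, Pi.zero_apply, Pi.zero_apply,
      Pi.zero_apply, neg_zero]
  have noDefect_apply : typeDefect I T X Y Z = 0 := congr_fun₃ noDefect X Y Z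
  rw [hN.two_mul_covOmega h.hermI, integrable]
  simp only [dI, h.hermI.sq, hT.map_neg]
  rw [typeDefect] at noDefect_apply
  linear_combination -noDefect_apply

theorem isQKTForm_and_torsionParallel_iff (hN : M.IsMetricConnection N) (h : M.IsAdapted I J K) :
    IsQKTForm I J K T ∧ M.TorsionParallel N T I ∧ M.TorsionParallel N T J ∧
        M.TorsionParallel N T K ↔
      T = act3 I (cycSum (M.covOmega N I)) ∧ T = act3 J (cycSum (M.covOmega N J)) ∧
        T = act3 K (cycSum (M.covOmega N K)) := by
  have act3_iff {A : V → V} (hA : M.IsHermitian A) (hT : IsForm3 T) :=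
    eq_act3_iff hT (hN.isForm3_cycSum_covOmega hA) hA.sq
  constructor
  · rintro ⟨hT, parI, parJ, parK⟩
    rw [act3_iff h.hermI hT.isForm3, act3_iff h.hermJ hT.isForm3, act3_iff h.hermK hT.isForm3]
    exact ⟨parI.cycSum_covOmega_eq hT.isForm3 h.hermI.sq hT.calL_I,
      parJ.cycSum_covOmega_eq hT.isForm3 h.hermJ.sq hT.calL_J,
      parK.cycSum_covOmega_eq hT.isForm3 h.hermK.sq hT.calL_K⟩
  · rintro ⟨eqI, eqJ, eqK⟩
    have hT : IsForm3 T :=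
      eqI ▸ (hN.isForm3_cycSum_covOmega h.hermI).act3 h.hermI.isLinearMap
    have dI := (act3_iff h.hermI hT).1 eqI
    have dJ := (act3_iff h.hermJ hT).1 eqJ
    have dK := (act3_iff h.hermK hT).1 eqK
    obtain ⟨calL_I, parI⟩ := hN.calL_eq_and_torsionParallel h hT dI dJ dK
    obtain ⟨calL_J, parJ⟩ := hN.calL_eq_and_torsionParallel h.rotate hT dJ dK dI
    obtain ⟨calL_K, parK⟩ := hN.calL_eq_and_torsionParallel h.rotate.rotate hT dK dI dJ
    exact ⟨⟨hT, calL_I, calL_J, calL_K⟩, parI, parJ, parK⟩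

end IsMetricConnection

end Connections

section QKTTorsion

variable {n : ℕ} {C V : Type*} [CommRing C] [Algebra ℝ C] [AddCommGroup V] [Module C V]
variable {M : AQH n C V} {I J K : V → V} {T : V → V → V → C} {γI γJ γK : V → C}

variable (M) in
/-- The metric quaternionic connection `∇ - ½ Σ_A γ_A ⊗ A`, for which
`∇_X I` becomes `∇_X I - γ_K(X) J + γ_J(X) K`. -/
def twist (I J K : V → V) (γI γJ γK : V → C) : V → V → V := fun X Y =>
  M.nab X Y - algebraMap ℝ C (1 / 2) • (γI X • I Y + γJ X • J Y + γK X • K Y)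

theorem twist_rotate : M.twist J K I γJ γK γI = M.twist I J K γI γJ γK := by
  funext X Y
  simp only [twist]
  abel_nf

theorem isMetricConnection_twist (h : M.IsAdapted I J K) (hγI : Lin1 γI) (hγJ : Lin1 γJ)
    (hγK : Lin1 γK) : M.IsMetricConnection (M.twist I J K γI γJ γK) where
  metric X Y Z := by
    have skewI := h.hermI.omega_skew Y Z
    have skewJ := h.hermJ.omega_skew Y Z
    have skewK := h.hermK.omega_skew Y Z
    have g_left (W : V) : M.g (M.twist I J K γI γJ γK X Y) W = M.g W (M.twist I J K γI γJ γK X Y) :=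
      M.g_symm _ _
    rw [g_left]
    simp only [twist, omega, (M.isLinearMap_g _).map_sub, (M.isLinearMap_g _).map_add,
      M.g_smul_right] at skewI skewJ skewK ⊢
    linear_combination M.nab_metric X Y Z + M.g_symm (M.nab X Y) Z
      + algebraMap ℝ C (1 / 2) * (γI X * skewI + γJ X * skewJ + γK X * skewK)
  isLinearMap Y := isLinearMap_of_map_smul_add fun f X X' => by
    simp only [twist, M.nab_addX, M.nab_smulX, hγI f, hγJ f, hγK f]
    module

theorem covOmega_twist (h : M.IsAdapted I J K) (X Y Z : V) :
    M.covOmega (M.twist I J K γI γJ γK) I X Y Z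
      = M.covOmega M.nab I X Y Z - γK X * M.omega J Y Z + γJ X * M.omega K Y Z := by
  simp only [covOmega, twist, omega, h.hermI.isLinearMap.map_sub, h.hermI.isLinearMap.map_smul,
    h.hermI.isLinearMap.map_add, h.mul_table, (M.isLinearMap_g _).map_sub,
    (M.isLinearMap_g _).map_add, (M.isLinearMap_g _).map_neg, M.g_smul_right]
  linear_combination (γJ X * M.g Y (K Z) - γK X * M.g Y (J Z)) * two_mul_algebraMap_half (C := C)

variable (M) in
/-- `d^c ω_A = A dω_A`. -/
def dc (A : V → V) : V → V → V → C := act3 A (M.d2 (M.omega A))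

variable (M) in
/-- The three-form `I dω_I + J(Kγ_K) ∧ ω_J + K(Jγ_J) ∧ ω_K`. -/
def torsionForm (I J K : V → V) (γJ γK : V → C) : V → V → V → C :=
  M.dc I + wedge12 (act1 J (act1 K γK)) (M.omega J) + wedge12 (act1 K (act1 J γJ)) (M.omega K)

theorem act3_cycSum_covOmega_twist (h : M.IsAdapted I J K) (hγK : Lin1 γK) :
    act3 I (cycSum (M.covOmega (M.twist I J K γI γJ γK) I)) = M.torsionForm I J K γJ γK := by
  funext X Y Z
  have skewJ := h.hermJ.omega_skew X Z
  have skewK := h.hermK.omega_skew X Z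
  rw [omega, omega] at skewJ skewK
  simp only [torsionForm, dc, d2_omega_eq_cycSum h.hermI, act3, cycSum, covOmega_twist h, wedge12,
    act1, Pi.add_apply, omega, h.hermI.g_left, h.mul_table, hγK.isLinearMap.map_neg,
    (M.isLinearMap_g _).map_neg, h.map_neg]
  linear_combination γJ (I Y) * skewK - γK (I Y) * skewJ

variable (M) in
/-- `T` satisfies the algebraic condition on the torsion of a QKT connection, and the metric
connection `∇ + T/2` is quaternionic with connection forms `γ_A`, that is `I`, `J`, `K` are
parallel for `M.twist I J K γI γJ γK + T/2`. -/
structure IsQKTTorsion (I J K : V → V) (T : V → V → V → C) (γI γJ γK : V → C) : Prop where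
  isQKTForm : IsQKTForm I J K T
  parallel_I : M.TorsionParallel (M.twist I J K γI γJ γK) T I
  parallel_J : M.TorsionParallel (M.twist I J K γI γJ γK) T J
  parallel_K : M.TorsionParallel (M.twist I J K γI γJ γK) T K

namespace IsQKTTorsion

theorem rotate (hT : M.IsQKTTorsion I J K T γI γJ γK) : M.IsQKTTorsion J K I T γJ γK γI where
  isQKTForm := hT.isQKTForm.rotate
  parallel_I := by rw [twist_rotate]; exact hT.parallel_J
  parallel_J := by rw [twist_rotate]; exact hT.parallel_K
  parallel_K := by rw [twist_rotate]; exact hT.parallel_I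

theorem two_mul_covOmega_nab (hT : M.IsQKTTorsion I J K T γI γJ γK) (h : M.IsAdapted I J K)
    (X Y Z : V) :
    2 * M.covOmega M.nab I X Y Z = 2 * (γK X * M.omega J Y Z - γJ X * M.omega K Y Z)
      + T X Y (I Z) + T X (I Y) Z := by
  have parallel := hT.parallel_I X Y Z
  rw [covOmega_twist h] at parallel
  linear_combination parallel

theorem lin1_γK (hT : M.IsQKTTorsion I J K T γI γJ γK) (h : M.IsAdapted I J K) (hn : 0 < n) :
    Lin1 γK := fun f X X' => by
  let e := M.frame ⟨0, by omega⟩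
  have g_self : M.g e e = 1 := by simp [e, M.frame_orthonormal]
  have quat (W : V) := hT.two_mul_covOmega_nab h W (J e) e
  have ω_J : M.omega J (J e) e = 1 := by rw [omega, h.hermJ.isometry, g_self]
  have ω_K : M.omega K (J e) e = 0 := by
    rw [omega, h.hermJ.g_left, h.rotate.mul, h.hermI.g_self, neg_zero]
  simp only [ω_J, ω_K] at quat
  have lin_cov := M.isMetricConnection_nab.lin1_covOmega_left h.hermI.isLinearMap (J e) e f X X'
  have lin_T := hT.isQKTForm.isForm3.lin f X X'
  refine two_mul_left_cancel ?_
  linear_combination f * quat X + quat X' - quat (f • X + X') + 2 * lin_cov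
    - lin_T (J e) (I e) - lin_T (I (J e)) e

end IsQKTTorsion

theorem isQKTTorsion_iff (h : M.IsAdapted I J K) (hγI : Lin1 γI) (hγJ : Lin1 γJ)
    (hγK : Lin1 γK) :
    M.IsQKTTorsion I J K T γI γJ γK ↔ T = M.torsionForm I J K γJ γK ∧
      T = M.torsionForm J K I γK γI ∧ T = M.torsionForm K I J γI γJ := by
  rw [← act3_cycSum_covOmega_twist (γI := γI) h hγK,
    ← act3_cycSum_covOmega_twist (γI := γJ) h.rotate hγI,
    ← act3_cycSum_covOmega_twist (γI := γK) h.rotate.rotate hγJ,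
    twist_rotate (I := J), twist_rotate (I := I),
    ← (isMetricConnection_twist h hγI hγJ hγK).isQKTForm_and_torsionParallel_iff h]
  exact ⟨fun hT => ⟨hT.1, hT.2, hT.3, hT.4⟩, fun hT => ⟨hT.1, hT.2.1, hT.2.2.1, hT.2.2.2⟩⟩

theorem g_Tvec (hT : Lin3 T) (W X Y : V) : M.g W (M.Tvec T X Y) = T W X Y := by
  have lin : Lin1 (fun W => T W X Y) := fun f W W' => hT f W W' X Y
  rw [Tvec, (M.lin1_g W).map_sum, ← M.sum_g_frame_mul lin W]
  exact Finset.sum_congr rfl fun i _ => by rw [M.g_smul_right, mul_comm]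

variable [Module ℝ V] [IsScalarTower ℝ C V]

theorem two_mul_covOmega_nab_of_nabT (hT : IsForm3 T) {A B B' : V → V} (hA : M.IsHermitian A)
    {b b' : V → C}
    (h : ∀ X Y, M.nabT T X (A Y) - A (M.nabT T X Y) = b X • B Y - b' X • B' Y) (X Y Z : V) :
    2 * M.covOmega M.nab A X Y Z = 2 * (b X * M.omega B Y Z - b' X * M.omega B' Y Z)
      + T X Y (A Z) + T X (A Y) Z := by
  have g_A (W : V) : M.g Y (A W) = -M.g (A Y) W := by rw [hA.g_left, neg_neg]
  have key := congrArg (M.g Y) (h X Z)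
  simp only [nabT, ← algebraMap_smul C (1 / 2 : ℝ), (M.isLinearMap_g _).map_sub,
    (M.isLinearMap_g _).map_add, M.g_smul_right, g_A, g_Tvec hT.lin] at key
  simp only [covOmega, (M.isLinearMap_g _).map_sub, g_A, omega]
  have half := two_mul_algebraMap_half (C := C)
  linear_combination 2 * key - (T Y X (A Z) + T (A Y) X Z) * half
    - hT.alt.1 X Y (A Z) - hT.alt.1 X (A Y) Z

theorem isQKTTorsion_of_quatConn (hT : IsQKTForm M.I M.J M.K T)
    (quat : M.QuatConn (M.nabT T) γI γJ γK) : M.IsQKTTorsion M.I M.J M.K T γI γJ γK := by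
  have h := M.isAdapted
  obtain ⟨quatI, quatJ, quatK⟩ := quat
  refine ⟨hT, fun X Y Z => ?_, fun X Y Z => ?_, fun X Y Z => ?_⟩
  · rw [covOmega_twist h]
    linear_combination two_mul_covOmega_nab_of_nabT hT.isForm3 h.hermI quatI X Y Z
  · rw [← twist_rotate, covOmega_twist h.rotate]
    linear_combination two_mul_covOmega_nab_of_nabT hT.isForm3 h.hermJ quatJ X Y Z
  · rw [← twist_rotate, ← twist_rotate, covOmega_twist h.rotate.rotate]
    linear_combination two_mul_covOmega_nab_of_nabT hT.isForm3 h.hermK quatK X Y Z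

end QKTTorsion

section Traces

variable {n : ℕ} {C V : Type*} [CommRing C] [Algebra ℝ C] [AddCommGroup V] [Module C V]
variable {M : AQH n C V} {A B I J K : V → V} {ν γI γJ γK : V → C} {T : V → V → V → C}

theorem sum_apply_right {F : V → V → C} (lin_left : ∀ Y, Lin1 (fun X => F X Y))
    (lin_right : ∀ X, Lin1 (F X)) (hB : M.IsHermitian B) :
    ∑ i, F (M.frame i) (B (M.frame i)) = -∑ i, F (B (M.frame i)) (M.frame i) := by
  simp only [← M.sum_g_frame_mul (lin_right _) (B _), ← M.sum_g_frame_mul (lin_left _) (B _)]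
  rw [Finset.sum_comm, ← Finset.sum_neg_distrib]
  refine Finset.sum_congr rfl fun i _ => ?_
  rw [← Finset.sum_neg_distrib]
  refine Finset.sum_congr rfl fun j _ => ?_
  rw [hB.g_left, M.g_symm]
  ring

theorem IsForm3.sum_apply_apply (hT : IsForm3 T) (hA : IsLinearMap C A) (hB : M.IsHermitian B)
    (X : V) :
    ∑ i, T X (A (M.frame i)) (B (M.frame i)) = -∑ i, T X (A (B (M.frame i))) (M.frame i) :=
  sum_apply_right (F := fun Y Z => T X (A Y) Z) (fun Z => (hT.lin1_mid X Z).comp hA)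
    (fun Y => hT.lin1_right X (A Y)) hB

variable (M) in
/-- The contraction `Σ_i T(X, A e_i, e_i)`, which is `2 Λ_A T`: see `two_mul_Lam`. -/
def trace (A : V → V) (T : V → V → V → C) : V → C := fun X =>
  ∑ i, T X (A (M.frame i)) (M.frame i)

theorem two_mul_Lam {X : V} (hT : ∀ Z, Lin1 (fun Y => T X Y Z)) (A : V → V) :
    2 * M.Lam A T X = M.trace A T X := by
  simp only [Lam, omega, Algebra.smul_def, ← mul_assoc, two_mul_algebraMap_half, one_mul]
  rw [Finset.sum_comm]
  refine Finset.sum_congr rfl fun j _ => ?_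
  rw [← M.sum_g_frame_mul (hT _) (A _)]
  exact Finset.sum_congr rfl fun i _ => by rw [M.g_symm, mul_comm]

theorem lin1_trace (hT : Lin3 T) (A : V → V) : Lin1 (M.trace A T) := fun f X X' => by
  simp only [trace, hT f X X', Finset.sum_add_distrib, Finset.mul_sum]

theorem trace_add (A : V → V) (T S : V → V → V → C) :
    M.trace A (T + S) = M.trace A T + M.trace A S := by
  funext X
  simp only [trace, Pi.add_apply, Finset.sum_add_distrib]

theorem trace_smul (A : V → V) (c : C) (T : V → V → V → C) :
    M.trace A (c • T) = c • M.trace A T := by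
  funext X
  simp only [trace, Pi.smul_apply, Finset.smul_sum]

theorem trace_wedge12 (hν : Lin1 ν) (hA : M.IsHermitian A) (hB : M.IsHermitian B) (X : V) :
    M.trace B (wedge12 ν (M.omega A)) X
      = ν X * ∑ i, M.g (B (M.frame i)) (A (M.frame i)) + 2 * ν (B (A X)) := by
  have summand (i) : wedge12 ν (M.omega A) X (B (M.frame i)) (M.frame i)
      = ν X * M.g (B (M.frame i)) (A (M.frame i))
        + M.g (A X) (M.frame i) * ν (B (M.frame i))
        + M.g (B (A X)) (M.frame i) * ν (M.frame i) := by
    simp only [wedge12, omega, hA.g_left, hB.g_left]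
    ring
  simp only [trace, summand, Finset.sum_add_distrib, ← Finset.mul_sum, M.sum_g_frame_mul hν,
    M.sum_g_frame_mul (hν.comp hB.isLinearMap)]
  ring

theorem trace_wedge12_self (hν : Lin1 ν) (hA : M.IsHermitian A) (X : V) :
    M.trace A (wedge12 ν (M.omega A)) X = (4 * n - 2) * ν X := by
  simp only [trace_wedge12 hν hA hA, hA.isometry, M.sum_g_frame_self, hA.sq,
    hν.isLinearMap.map_neg]
  ring

theorem trace_wedge12_of_orthogonal (hν : Lin1 ν) (hA : M.IsHermitian A) (hB : M.IsHermitian B)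
    (orthogonal : ∀ X, M.g (B X) (A X) = 0) (X : V) :
    M.trace B (wedge12 ν (M.omega A)) X = 2 * ν (B (A X)) := by
  simp only [trace_wedge12 hν hA hB, orthogonal, Finset.sum_const_zero, mul_zero, zero_add]

theorem IsAdapted.orthogonal (h : M.IsAdapted I J K) (X : V) :
    M.g (I X) (J X) = 0 ∧ M.g (J X) (I X) = 0 := by
  have orthogonal : M.g (I X) (J X) = 0 := by rw [h.hermI.g_left, h.mul, h.hermK.g_self, neg_zero]
  exact ⟨orthogonal, by rw [M.g_symm, orthogonal]⟩

theorem IsAdapted.trace_wedge12_mul (h : M.IsAdapted I J K) (hν : Lin1 ν) (X : V) :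
    M.trace I (wedge12 ν (M.omega J)) X = 2 * ν (K X) ∧
      M.trace J (wedge12 ν (M.omega I)) X = -2 * ν (K X) := by
  constructor
  · rw [trace_wedge12_of_orthogonal hν h.hermJ h.hermI fun X => (h.orthogonal X).1, h.mul]
  · rw [trace_wedge12_of_orthogonal hν h.hermI h.hermJ fun X => (h.orthogonal X).2, h.mul_rev,
      hν.isLinearMap.map_neg]
    ring

theorem IsQKTForm.trace_I (hT : IsQKTForm I J K T) (h : M.IsAdapted I J K) (X : V) :
    M.trace I T X = -M.trace K T (J X) := by
  have hT3 := hT.isForm3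
  have sum_calL : ∑ i, calL J T X (I (M.frame i)) (M.frame i) = M.trace I T X := by
    rw [hT.calL_J]
    rfl
  simp only [calL, op12, op13, op23, Finset.sum_add_distrib, h.mul_rev, hT3.map_neg,
    Finset.sum_neg_distrib, hT3.sum_apply_apply h.hermI.isLinearMap h.hermJ,
    hT3.sum_apply_apply h.hermK.isLinearMap h.hermJ, h.mul_table] at sum_calL
  rw [neg_neg] at sum_calL
  refine two_mul_left_cancel ?_
  simp only [trace] at sum_calL ⊢
  linear_combination -sum_calL

theorem IsQKTForm.trace_J (hT : IsQKTForm I J K T) (h : M.IsAdapted I J K) (X : V) :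
    M.trace J T X = -M.trace I T (K X) :=
  hT.rotate.trace_I h.rotate X

theorem IsQKTForm.trace_K (hT : IsQKTForm I J K T) (h : M.IsAdapted I J K) (X : V) :
    M.trace K T X = M.trace I T (J X) := by
  rw [hT.trace_I h, h.hermJ.sq, (lin1_trace hT.isForm3.lin K).isLinearMap.map_neg, neg_neg]

theorem IsHermitian.isForm3_d2_omega (hA : M.IsHermitian A) : IsForm3 (M.d2 (M.omega A)) := by
  rw [d2_omega_eq_cycSum hA]
  exact M.isMetricConnection_nab.isForm3_cycSum_covOmega hA

namespace IsQKTTorsion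

theorem d2_omega (hT : M.IsQKTTorsion I J K T γI γJ γK) (h : M.IsAdapted I J K) (X Y Z : V) :
    M.d2 (M.omega I) X Y Z = wedge12 γK (M.omega J) X Y Z - wedge12 γJ (M.omega K) X Y Z
      + T (I X) Y Z + T X (I Y) Z + T X Y (I Z) := by
  have cov := hT.two_mul_covOmega_nab h
  have cyc := hT.isQKTForm.isForm3.cyclic
  refine two_mul_left_cancel ?_
  rw [d2_omega_eq_cycSum h.hermI]
  simp only [cycSum, wedge12]
  linear_combination cov X Y Z + cov Y Z X + cov Z X Y
    + 2 * (γK Y * h.hermJ.omega_skew Z X - γJ Y * h.hermK.omega_skew Z X)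
    + cyc (I X) Y Z - cyc Z (I X) Y + cyc X Y (I Z) - cyc Z X (I Y)

theorem trace_d2_omega (hT : M.IsQKTTorsion I J K T γI γJ γK) (h : M.IsAdapted I J K)
    (hA : IsLinearMap C A) (X : V) :
    M.trace A (M.d2 (M.omega I)) X
      = M.trace A (wedge12 γK (M.omega J)) X - M.trace A (wedge12 γJ (M.omega K)) X
        + M.trace A T (I X) + ∑ i, T X (I (A (M.frame i))) (M.frame i)
        - ∑ i, T X (A (I (M.frame i))) (M.frame i) := by
  have move := hT.isQKTForm.isForm3.sum_apply_apply hA h.hermI X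
  simp only [trace, hT.d2_omega h, Finset.sum_add_distrib, Finset.sum_sub_distrib, move]
  ring

theorem trace_I_d2_omega (hT : M.IsQKTTorsion I J K T γI γJ γK) (h : M.IsAdapted I J K)
    (hγJ : Lin1 γJ) (hγK : Lin1 γK) (X : V) :
    M.trace I (M.d2 (M.omega I)) X = 2 * γK (K X) + 2 * γJ (J X) + M.trace I T (I X) := by
  rw [hT.trace_d2_omega h h.hermI.isLinearMap, (h.trace_wedge12_mul hγK X).1,
    (h.rotate.rotate.trace_wedge12_mul hγJ X).2]
  ring

theorem trace_J_d2_omega (hT : M.IsQKTTorsion I J K T γI γJ γK) (h : M.IsAdapted I J K)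
    (hγJ : Lin1 γJ) (hγK : Lin1 γK) (X : V) :
    M.trace J (M.d2 (M.omega I)) X
      = (4 * n - 2) * γK X - 2 * γJ (I X) + M.trace I T (J X) := by
  rw [hT.trace_d2_omega h h.hermJ.isLinearMap, trace_wedge12_self hγK h.hermJ,
    (h.rotate.trace_wedge12_mul hγJ X).1, hT.isQKTForm.trace_J h, h.rotate.rotate.mul]
  simp only [h.mul, h.mul_rev, hT.isQKTForm.isForm3.map_neg, Finset.sum_neg_distrib]
  have trace_K := hT.isQKTForm.trace_K h X
  rw [trace] at trace_K
  linear_combination 2 * trace_K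

theorem trace_K_d2_omega (hT : M.IsQKTTorsion I J K T γI γJ γK) (h : M.IsAdapted I J K)
    (hγJ : Lin1 γJ) (hγK : Lin1 γK) (X : V) :
    M.trace K (M.d2 (M.omega I)) X
      = -2 * γK (I X) - (4 * n - 2) * γJ X + M.trace I T (K X) := by
  rw [hT.trace_d2_omega h h.hermK.isLinearMap, trace_wedge12_self hγJ h.hermK,
    (h.rotate.trace_wedge12_mul hγK X).2, hT.isQKTForm.trace_K h, h.mul_rev,
    (lin1_trace hT.isQKTForm.isForm3.lin I).isLinearMap.map_neg]
  simp only [h.mul_table, hT.isQKTForm.isForm3.map_neg, Finset.sum_neg_distrib]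
  have trace_J := hT.isQKTForm.trace_J h X
  rw [trace] at trace_J
  linear_combination -2 * trace_J

theorem smul_act1_K (hT : M.IsQKTTorsion I J K T γI γJ γK) (h : M.IsAdapted I J K)
    (hγJ : Lin1 γJ) (hγK : Lin1 γK) :
    (2 * ((n : ℝ) - 1)) • act1 K γK
      = M.Lam I (M.d2 (M.omega I)) + act1 K (M.Lam J (M.d2 (M.omega I))) := by
  funext X
  have lam_I := two_mul_Lam (M := M) (h.hermI.isForm3_d2_omega.lin1_mid X) I
  have lam_J := two_mul_Lam (M := M) (h.hermI.isForm3_d2_omega.lin1_mid (K X)) J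
  rw [hT.trace_I_d2_omega h hγJ hγK] at lam_I
  rw [hT.trace_J_d2_omega h hγJ hγK, h.rotate.mul, h.rotate.rotate.mul_rev,
    hγJ.isLinearMap.map_neg] at lam_J
  simp only [Pi.smul_apply, Pi.add_apply, act1, Algebra.smul_def, map_mul, map_sub, map_ofNat,
    map_natCast, map_one]
  refine two_mul_left_cancel ?_
  linear_combination -lam_I + lam_J

theorem smul_act1_J (hT : M.IsQKTTorsion I J K T γI γJ γK) (h : M.IsAdapted I J K)
    (hγJ : Lin1 γJ) (hγK : Lin1 γK) :
    (2 * ((n : ℝ) - 1)) • act1 J γJ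
      = M.Lam I (M.d2 (M.omega I)) - act1 J (M.Lam K (M.d2 (M.omega I))) := by
  funext X
  have lam_I := two_mul_Lam (M := M) (h.hermI.isForm3_d2_omega.lin1_mid X) I
  have lam_K := two_mul_Lam (M := M) (h.hermI.isForm3_d2_omega.lin1_mid (J X)) K
  rw [hT.trace_I_d2_omega h hγJ hγK] at lam_I
  rw [hT.trace_K_d2_omega h hγJ hγK, h.mul, h.rotate.mul_rev,
    (lin1_trace hT.isQKTForm.isForm3.lin I).isLinearMap.map_neg] at lam_K
  simp only [Pi.smul_apply, Pi.sub_apply, act1, Algebra.smul_def, map_mul, map_sub, map_ofNat,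
    map_natCast, map_one]
  refine two_mul_left_cancel ?_
  linear_combination -lam_I - lam_K

end IsQKTTorsion

end Traces

section SpComplement

variable {C V : Type*} [CommRing C] {I J K : V → V} {T S : V → V → V → C}

/-- The tensor `3T - Σ_A A_(23) T`: four times the projection of `T`, in its last two arguments,
to the complement of `sp(n)` in the two-forms. -/
def spComplement (I J K : V → V) (T : V → V → V → C) : V → V → V → C := fun X Y Z =>
  3 * T X Y Z - (T X (I Y) (I Z) + T X (J Y) (J Z) + T X (K Y) (K Z))

theorem spComplement_rotate : spComplement J K I T = spComplement I J K T := by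
  funext X Y Z
  simp only [spComplement]
  ring

theorem spComplement_add :
    spComplement I J K (T + S) = spComplement I J K T + spComplement I J K S := by
  funext X Y Z
  simp only [spComplement, Pi.add_apply]
  ring

theorem spComplement_smul (c : C) : spComplement I J K (c • T) = c • spComplement I J K T := by
  funext X Y Z
  simp only [spComplement, Pi.smul_apply, smul_eq_mul]
  ring

end SpComplement

section CovOmegaSum

variable {n : ℕ} {C V : Type*} [CommRing C] [Algebra ℝ C] [AddCommGroup V] [Module C V]
variable {M : AQH n C V} {N : V → V → V} {I J K : V → V} {γI γJ γK : V → C}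
variable {T : V → V → V → C}

variable (M) in
/-- The tensor `Σ_A (N_X ω_A)(A Y, Z)`: for the Levi-Civita connection `N` it is, up to a factor,
the part of the intrinsic torsion not involving the one-forms `λ_A`. -/
def covOmegaSum (N : V → V → V) (I J K : V → V) : V → V → V → C := fun X Y Z =>
  M.covOmega N I X (I Y) Z + M.covOmega N J X (J Y) Z + M.covOmega N K X (K Y) Z

variable (M) in
/-- The tensor `Σ_A γ_A ⊗ ω_A`. -/
def kahlerTensor (I J K : V → V) (γI γJ γK : V → C) : V → V → V → C := fun X Y Z =>
  γI X * M.omega I Y Z + γJ X * M.omega J Y Z + γK X * M.omega K Y Z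

theorem covOmegaSum_map_right_add_map_left (hN : M.IsMetricConnection N) (h : M.IsAdapted I J K)
    (X Y Z : V) :
    M.covOmegaSum N I J K X Y (I Z) + M.covOmegaSum N I J K X (I Y) Z
      = -4 * M.covOmega N I X Y Z := by
  have hI := hN.covOmega_map_map h.hermI X Y Z
  have hJ := hN.covOmega_map_map h.hermJ X Y (K Z)
  have hJ' := hN.covOmega_map_map h.hermJ X (K Y) Z
  have mul := covOmega_mul (N := N) h.rotate X Y Z
  have mul' := covOmega_mul (N := N) h.rotate X (I Y) (I Z)
  simp only [h.mul_table, hN.covOmega_map_neg h.hermK]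
    at hJ hJ' mul mul'
  simp only [covOmegaSum, h.mul_table, hN.covOmega_map_neg h.hermI, hN.covOmega_map_neg h.hermJ]
  linear_combination 2 * hI + hJ - hJ' + mul - mul'

theorem covOmegaSum_rotate : M.covOmegaSum N J K I = M.covOmegaSum N I J K := by
  funext X Y Z
  simp only [covOmegaSum]
  ring

theorem kahlerTensor_rotate :
    M.kahlerTensor J K I γJ γK γI = M.kahlerTensor I J K γI γJ γK := by
  funext X Y Z
  simp only [kahlerTensor]
  ring

theorem torsionParallel_of_covOmegaSum (h : M.IsAdapted I J K) (hT : IsForm3 T)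
    (sum_eq : ∀ X Y Z, 2 * M.covOmegaSum M.nab I J K X Y Z
      = -spComplement I J K T X Y Z - 4 * M.kahlerTensor I J K γI γJ γK X Y Z) :
    M.TorsionParallel (M.twist I J K γI γJ γK) T I := fun X Y Z => by
  have cov := covOmegaSum_map_right_add_map_left M.isMetricConnection_nab h X Y Z
  have sum_right := sum_eq X Y (I Z)
  have sum_left := sum_eq X (I Y) Z
  rw [covOmega_twist h]
  refine natCast_mul_left_cancel (m := 4) (by norm_num) ?_
  simp only [spComplement, kahlerTensor, omega, h.hermI.g_left, h.mul_table, hT.map_neg,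
    (M.isLinearMap_g _).map_neg] at sum_right sum_left ⊢
  push_cast
  linear_combination -sum_right - sum_left + 2 * cov

theorem isQKTTorsion_iff_covOmegaSum (h : M.IsAdapted I J K) (hT : IsQKTForm I J K T) :
    M.IsQKTTorsion I J K T γI γJ γK ↔ ∀ X Y Z, 2 * M.covOmegaSum M.nab I J K X Y Z
      = -spComplement I J K T X Y Z - 4 * M.kahlerTensor I J K γI γJ γK X Y Z := by
  refine ⟨fun hT X Y Z => ?_, fun sum_eq => ⟨hT, ?_, ?_, ?_⟩⟩
  · have covI := hT.two_mul_covOmega_nab h X (I Y) Z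
    have covJ := hT.rotate.two_mul_covOmega_nab h.rotate X (J Y) Z
    have covK := hT.rotate.rotate.two_mul_covOmega_nab h.rotate.rotate X (K Y) Z
    simp only [covOmegaSum, spComplement, kahlerTensor, omega, h.hermI.g_left, h.hermJ.g_left,
      h.hermK.g_left, h.mul_table, hT.isQKTForm.isForm3.map_neg, (M.isLinearMap_g _).map_neg]
      at covI covJ covK ⊢
    linear_combination covI + covJ + covK
  · exact torsionParallel_of_covOmegaSum h hT.isForm3 sum_eq
  · rw [← twist_rotate]
    refine torsionParallel_of_covOmegaSum h.rotate hT.isForm3 ?_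
    rwa [covOmegaSum_rotate, spComplement_rotate, kahlerTensor_rotate]
  · rw [← twist_rotate, ← twist_rotate]
    refine torsionParallel_of_covOmegaSum h.rotate.rotate hT.isForm3 ?_
    rwa [covOmegaSum_rotate, covOmegaSum_rotate, spComplement_rotate, spComplement_rotate,
      kahlerTensor_rotate, kahlerTensor_rotate]

end CovOmegaSum

section KahlerWedge

variable {n : ℕ} {C V : Type*} [CommRing C] [Algebra ℝ C] [AddCommGroup V] [Module C V]
variable {M : AQH n C V} {I J K : V → V} {θ : V → C} {T ψ : V → V → V → C}

variable (M) in
/-- The three-form `Σ_A Aθ ∧ ω_A`: these three-forms make up the `EH`-component of the space of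
torsion three-forms of QKT connections. -/
def kahlerWedge (I J K : V → V) (θ : V → C) : V → V → V → C :=
  wedge12 (act1 I θ) (M.omega I) + wedge12 (act1 J θ) (M.omega J) + wedge12 (act1 K θ) (M.omega K)

theorem kahlerWedge_rotate : M.kahlerWedge J K I θ = M.kahlerWedge I J K θ := by
  simp only [kahlerWedge]
  abel

theorem calL_I_kahlerWedge (h : M.IsAdapted I J K) (hθ : Lin1 θ) :
    calL I (M.kahlerWedge I J K θ) = M.kahlerWedge I J K θ := by
  funext X Y Z
  simp only [calL, op12, op13, op23, kahlerWedge, Pi.add_apply, wedge12, act1, omega,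
    h.hermI.g_left, h.mul_table, hθ.isLinearMap.map_neg, (M.isLinearMap_g _).map_neg, h.map_neg]
  ring

theorem isQKTForm_kahlerWedge (h : M.IsAdapted I J K) (hθ : Lin1 θ) :
    IsQKTForm I J K (M.kahlerWedge I J K θ) where
  isForm3 := ((h.hermI.isForm3_wedge12 (hθ.act1 h.hermI.isLinearMap)).add
    (h.hermJ.isForm3_wedge12 (hθ.act1 h.hermJ.isLinearMap))).add
      (h.hermK.isForm3_wedge12 (hθ.act1 h.hermK.isLinearMap))
  calL_I := calL_I_kahlerWedge h hθ
  calL_J := by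
    rw [← kahlerWedge_rotate]
    exact calL_I_kahlerWedge h.rotate hθ
  calL_K := by
    rw [← kahlerWedge_rotate, ← kahlerWedge_rotate]
    exact calL_I_kahlerWedge h.rotate.rotate hθ

theorem trace_I_kahlerWedge (h : M.IsAdapted I J K) (hθ : Lin1 θ) (X : V) :
    M.trace I (M.kahlerWedge I J K θ) X = -(4 * n + 2) * θ (I X) := by
  have trace_J := (h.trace_wedge12_mul (hθ.act1 h.hermJ.isLinearMap) X).1
  have trace_K := (h.rotate.rotate.trace_wedge12_mul (hθ.act1 h.hermK.isLinearMap) X).2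
  simp only [kahlerWedge, trace_add, Pi.add_apply, trace_J, trace_K,
    trace_wedge12_self (hθ.act1 h.hermI.isLinearMap) h.hermI]
  simp only [act1, h.mul_table, hθ.isLinearMap.map_neg]
  ring

theorem IsQKTForm.trace_eq_zero (hψ : IsQKTForm I J K ψ) (h : M.IsAdapted I J K)
    (trace_I : M.trace I ψ = 0) : M.trace J ψ = 0 ∧ M.trace K ψ = 0 := by
  constructor <;> funext X
  · rw [hψ.trace_J h, trace_I, Pi.zero_apply, Pi.zero_apply, neg_zero]
  · rw [hψ.trace_K h, trace_I, Pi.zero_apply, Pi.zero_apply]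

/-- The form `θ` is found by taking traces, as `trace I ψ = 0` and
`trace I (M.kahlerWedge I J K θ) = (4n + 2) Iθ`. -/
theorem IsQKTForm.exists_kahlerWedge_decomposition (hT : IsQKTForm I J K T)
    (h : M.IsAdapted I J K) :
    ∃ (ψ : V → V → V → C) (θ : V → C), IsQKTForm I J K ψ ∧ M.trace I ψ = 0 ∧ Lin1 θ ∧
      T = (-8 : C) • (ψ + M.kahlerWedge I J K θ) := by
  have inv_mul := natCast_mul_algebraMap_inv (C := C) (m := 8) (by norm_num)
  have inv_mul' := natCast_mul_algebraMap_inv (C := C) (m := 4 * n + 2) (by omega)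
  set c := algebraMap ℝ C ((8 : ℕ) : ℝ)⁻¹
  set c' := algebraMap ℝ C ((4 * n + 2 : ℕ) : ℝ)⁻¹
  push_cast at inv_mul inv_mul'
  have lin_trace : Lin1 (M.trace I T) := lin1_trace hT.isForm3.lin I
  let θ : V → C := (c * c') • act1 I (M.trace I T)
  have lin_θ : Lin1 θ := fun f X X' => by
    simp only [θ, Pi.smul_apply, smul_eq_mul, lin_trace.act1 h.hermI.isLinearMap f X X']
    ring
  refine ⟨(-c) • T + (-1 : C) • M.kahlerWedge I J K θ, θ,
    (hT.smul _).add ((isQKTForm_kahlerWedge h lin_θ).smul _), ?_, lin_θ, ?_⟩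
  · funext X
    simp only [trace_add, trace_smul, Pi.add_apply, Pi.smul_apply, trace_I_kahlerWedge h lin_θ,
      θ, act1, smul_eq_mul, h.hermI.sq, lin_trace.isLinearMap.map_neg, Pi.zero_apply]
    linear_combination c * M.trace I T X * inv_mul'
  · funext X Y Z
    simp only [Pi.add_apply, Pi.smul_apply, smul_eq_mul]
    linear_combination -T X Y Z * inv_mul

end KahlerWedge

section IntrinsicTorsion

variable {n : ℕ} {C V : Type*} [CommRing C] [Algebra ℝ C] [AddCommGroup V] [Module C V]
variable {M : AQH n C V} {A B I J K : V → V} {θ γI γJ γK : V → C} {T ψ : V → V → V → C}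

variable (M) in
/-- The one-form `X ↦ (1/2n) ⟨∇_X ω_A, ω_B⟩`, so that `λ_I` is `M.lambda M.J M.K`. -/
def lambda (A B : V → V) : V → C := fun X =>
  (1 / (2 * (n : ℝ))) • M.inner2 (fun Y Z => M.nab2 (M.omega A) X Y Z) (M.omega B)

theorem natCast_mul_lambda (hn : 0 < n) (hA : M.IsHermitian A) (X : V) :
    4 * n * M.lambda A B X = M.trace B (M.covOmega M.nab A) X := by
  have inv_mul := natCast_mul_algebraMap_inv (C := C) (m := 2 * n) (by omega)
  have nab2_omega : (fun X Y Z => M.nab2 (M.omega A) X Y Z) = M.covOmega M.nab A := by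
    funext X Y Z
    rw [nab2, M.isMetricConnection_nab.covOmega_eq hA, hA.omega_skew Y (M.nab X Z),
      sub_neg_eq_add]
  have lambda_eq : M.lambda A B X
      = (1 / (2 * (n : ℝ))) • M.Lam B (fun X Y Z => M.nab2 (M.omega A) X Y Z) X := rfl
  rw [lambda_eq, nab2_omega, Algebra.smul_def, one_div]
  push_cast at inv_mul
  linear_combination 2 * M.Lam B (M.covOmega M.nab A) X * inv_mul
    + two_mul_Lam (lin1_covOmega_mid (M := M) (N := M.nab) (A := A) X) B

theorem IsQKTTorsion.trace_K_covOmega_J (hT : M.IsQKTTorsion I J K T γI γJ γK)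
    (h : M.IsAdapted I J K) (X : V) :
    M.trace K (M.covOmega M.nab J) X = 4 * n * γI X + M.trace I T X := by
  have hT3 := hT.isQKTForm.isForm3
  have summand (i) : 2 * M.covOmega M.nab J X (K (M.frame i)) (M.frame i)
      = 2 * (γI X * M.g (M.frame i) (M.frame i)) + T X (K (M.frame i)) (J (M.frame i))
        + T X (I (M.frame i)) (M.frame i) := by
    rw [hT.rotate.two_mul_covOmega_nab h.rotate, h.rotate.mul, omega, omega, h.hermK.isometry,
      (h.rotate.rotate.orthogonal _).1]
    ring
  refine two_mul_left_cancel ?_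
  rw [trace, Finset.mul_sum, Finset.sum_congr rfl fun i _ => summand i]
  simp only [Finset.sum_add_distrib, ← Finset.mul_sum, M.sum_g_frame_self,
    hT3.sum_apply_apply h.hermK.isLinearMap h.hermJ, h.mul_table, hT3.map_neg,
    Finset.sum_neg_distrib, trace]
  ring

variable (M) in
/-- The one-form `λ_I + (8 + 4/n) Iθ`, which is `γ_I` for the QKT connection with torsion
three-form `-8(ψ + Σ_A Aθ ∧ ω_A)`, where `Λ_I ψ = 0`. -/
def connectionForm (I J K : V → V) (θ : V → C) : V → C :=
  M.lambda J K + (8 + 2 * algebraMap ℝ C (2 / n)) • act1 I θ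

theorem natCast_mul_algebraMap_two_div (hn : 0 < n) : n * algebraMap ℝ C (2 / n) = 2 := by
  rw [div_eq_mul_inv, map_mul, map_ofNat]
  linear_combination 2 * natCast_mul_algebraMap_inv (C := C) hn.ne'

theorem IsQKTTorsion.γI_eq_connectionForm (h : M.IsAdapted I J K) (hn : 0 < n) (hθ : Lin1 θ)
    (trace_ψ : M.trace I ψ = 0)
    (hT : M.IsQKTTorsion I J K ((-8 : C) • (ψ + M.kahlerWedge I J K θ)) γI γJ γK) :
    γI = M.connectionForm I J K θ := by
  funext X
  have lambda_eq := natCast_mul_lambda (B := K) hn h.hermJ X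
  rw [hT.trace_K_covOmega_J h, trace_smul, trace_add, trace_ψ, zero_add, Pi.smul_apply,
    trace_I_kahlerWedge h hθ, smul_eq_mul] at lambda_eq
  refine natCast_mul_left_cancel (m := 4 * n) (by omega) ?_
  simp only [connectionForm, Pi.add_apply, Pi.smul_apply, smul_eq_mul, act1]
  push_cast
  linear_combination -lambda_eq + 8 * θ (I X) * natCast_mul_algebraMap_two_div (C := C) hn

theorem spComplement_kahlerWedge (h : M.IsAdapted I J K) (hθ : Lin1 θ) (X Y Z : V) :
    spComplement I J K (M.kahlerWedge I J K θ) X Y Z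
      = 3 * (M.g X Y * θ Z - M.g X Z * θ Y)
        - (M.g (I X) Y * act1 I θ Z - M.g (I X) Z * act1 I θ Y)
        - (M.g (J X) Y * act1 J θ Z - M.g (J X) Z * act1 J θ Y)
        - (M.g (K X) Y * act1 K θ Z - M.g (K X) Z * act1 K θ Y)
        + 4 * M.kahlerTensor I J K (act1 I θ) (act1 J θ) (act1 K θ) X Y Z := by
  simp only [spComplement, kahlerWedge, kahlerTensor, Pi.add_apply, wedge12, act1, omega,
    h.hermI.g_left, h.hermJ.g_left, h.hermK.g_left, h.mul_table, h.map_neg,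
    hθ.isLinearMap.map_neg, (M.isLinearMap_g _).map_neg]
  ring

theorem xiKH3_eq (ψ : V → V → V → C) : M.xiKH3 ψ = spComplement M.I M.J M.K ψ := by
  funext X Y Z
  simp only [xiKH3, spComplement, op23, Algebra.smul_def, map_ofNat]

theorem xiEH3_eq (hθ : Lin1 θ) (X Y Z : V) :
    M.xiEH3 θ X Y Z = spComplement M.I M.J M.K (M.kahlerWedge M.I M.J M.K θ) X Y Z
      - (4 + algebraMap ℝ C (2 / n))
        * M.kahlerTensor M.I M.J M.K (act1 M.I θ) (act1 M.J θ) (act1 M.K θ) X Y Z := by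
  have contract {A : V → V} (hA : IsLinearMap C A) (a b : C) :
      ∑ i, M.g (M.frame i) X * (M.g (A (M.frame i)) Y * a - M.g (A (M.frame i)) Z * b)
        = M.g (A X) Y * a - M.g (A X) Z * b := by
    rw [← M.sum_g_frame_mul (ν := fun W => M.g (A W) Y * a - M.g (A W) Z * b) _ X]
    · simp only [M.g_symm X]
    · intro f W W'
      simp only [hA.map_add, hA.map_smul, M.g_add, M.g_smul]
      ring
  have contract_id := contract (A := id) LinearMap.id.isLinear (θ Z) (θ Y)
  have h := M.isAdapted
  simp only [id] at contract_id
  rw [spComplement_kahlerWedge h hθ, xiEH3, contract_id, contract h.hermI.isLinearMap,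
    contract h.hermJ.isLinearMap, contract h.hermK.isLinearMap, Algebra.smul_def, Algebra.smul_def,
    map_ofNat, kahlerTensor]
  ring

variable [Module ℝ V] [IsScalarTower ℝ C V]

theorem eight_mul_g_xi (X Y Z : V) :
    8 * M.g Y (M.xi X Z) = 2 * M.covOmegaSum M.nab M.I M.J M.K X Y Z
      + 4 * M.kahlerTensor M.I M.J M.K (M.lambda M.J M.K) (M.lambda M.K M.I)
        (M.lambda M.I M.J) X Y Z := by
  have h := M.isAdapted
  have lambdaI : M.lambdaI = M.lambda M.J M.K := rfl
  have lambdaJ : M.lambdaJ = M.lambda M.K M.I := rfl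
  have lambdaK : M.lambdaK = M.lambda M.I M.J := rfl
  have half := two_mul_algebraMap_half (C := C)
  have quarter : 4 * algebraMap ℝ C (1 / 4) = 1 := by
    rw [← map_ofNat (algebraMap ℝ C) 4, ← map_mul]
    norm_num
  simp only [xi, nabA, ← algebraMap_smul C (_ : ℝ) (_ : V), map_neg, lambdaI, lambdaJ, lambdaK,
    (M.isLinearMap_g _).map_add, M.g_smul_right, covOmegaSum, covOmega, kahlerTensor, omega,
    h.hermI.g_left, h.hermJ.g_left, h.hermK.g_left]
  linear_combination 4 * (M.lambda M.J M.K X * M.g Y (M.I Z) + M.lambda M.K M.I X * M.g Y (M.J Z)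
      + M.lambda M.I M.J X * M.g Y (M.K Z)) * half
    - 2 * (M.g Y (M.I (M.nab X (M.I Z) - M.I (M.nab X Z)))
      + M.g Y (M.J (M.nab X (M.J Z) - M.J (M.nab X Z)))
      + M.g Y (M.K (M.nab X (M.K Z) - M.K (M.nab X Z)))) * quarter

theorem isQKTTorsion_iff_g_xi (hψ : IsQKTForm M.I M.J M.K ψ) (hθ : Lin1 θ) :
    M.IsQKTTorsion M.I M.J M.K ((-8 : C) • (ψ + M.kahlerWedge M.I M.J M.K θ))
        (M.connectionForm M.I M.J M.K θ) (M.connectionForm M.J M.K M.I θ)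
        (M.connectionForm M.K M.I M.J θ) ↔
      ∀ X Y Z, M.g Y (M.xi X Z) = M.xiKH3 ψ X Y Z + M.xiEH3 θ X Y Z := by
  have h := M.isAdapted
  rw [isQKTTorsion_iff_covOmegaSum h ((hψ.add (isQKTForm_kahlerWedge h hθ)).smul _)]
  refine forall₃_congr fun X Y Z => ?_
  have xi_eq := eight_mul_g_xi (M := M) X Y Z
  have xiEH := xiEH3_eq (M := M) hθ X Y Z
  simp only [spComplement_smul, spComplement_add, xiKH3_eq, Pi.add_apply, Pi.smul_apply,
    smul_eq_mul, kahlerTensor, connectionForm] at xi_eq xiEH ⊢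
  constructor <;> intro eq
  · refine natCast_mul_left_cancel (m := 8) (by norm_num) ?_
    push_cast
    linear_combination xi_eq + eq - 8 * xiEH
  · linear_combination -xi_eq + 8 * eq + 8 * xiEH

variable (M) in
theorem inKEH_iff (hn : 0 < n) :
    M.inKEH ↔ ∃ T γI γJ γK, M.IsQKTTorsion M.I M.J M.K T γI γJ γK := by
  have h := M.isAdapted
  constructor
  · rintro ⟨ψ, θ, ⟨alt, lin, calL_I, calL_J, calL_K, -⟩, hθ, xi_eq⟩
    exact ⟨_, _, _, _, (isQKTTorsion_iff_g_xi ⟨⟨alt, lin⟩, calL_I, calL_J, calL_K⟩ hθ).2 xi_eq⟩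
  · rintro ⟨T, γI, γJ, γK, hT⟩
    obtain ⟨ψ, θ, hψ, trace_I, hθ, rfl⟩ := hT.isQKTForm.exists_kahlerWedge_decomposition h
    obtain ⟨trace_J, trace_K⟩ := hψ.trace_eq_zero h trace_I
    have Lam_eq_zero {A : V → V} (trace_A : M.trace A ψ = 0) : M.Lam A ψ = 0 := by
      funext X
      refine two_mul_left_cancel ?_
      rw [two_mul_Lam (hψ.isForm3.lin1_mid X), trace_A, Pi.zero_apply, mul_zero]
    have γI_eq := hT.γI_eq_connectionForm h hn hθ trace_I
    have hT' := hT.rotate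
    rw [← kahlerWedge_rotate] at hT'
    have γJ_eq := hT'.γI_eq_connectionForm h.rotate hn hθ trace_J
    have hT'' := hT'.rotate
    rw [← kahlerWedge_rotate] at hT''
    have γK_eq := hT''.γI_eq_connectionForm h.rotate.rotate hn hθ trace_K
    subst γI_eq γJ_eq γK_eq
    exact ⟨ψ, θ, ⟨hψ.isForm3.alt, hψ.isForm3.lin, hψ.calL_I, hψ.calL_J, hψ.calL_K,
      Lam_eq_zero trace_I, Lam_eq_zero trace_J, Lam_eq_zero trace_K⟩, hθ,
      (isQKTTorsion_iff_g_xi hψ hθ).1 hT⟩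

end IntrinsicTorsion

section BetaForms

variable {n : ℕ} {C V : Type*} [CommRing C] [Algebra ℝ C] [AddCommGroup V] [Module C V]
variable {M : AQH n C V} {I J K : V → V} {γI γJ γK : V → C}

variable (M) in
/-- The three-form `J dω_J + K dω_K`, so that `β_I` is `M.beta M.J M.K`. -/
def beta (J K : V → V) : V → V → V → C := M.dc J + M.dc K

variable (M) in
/-- The condition `β_J - β_I = I dω_I - J dω_J = I(Kγ_K) ∧ ω_I - J(Kγ_K) ∧ ω_J + Kγ_K⁻ ∧ ω_K` on
the one-forms of a quaternionic connection, where `γ_K⁻ = Iγ_I - Jγ_J`. -/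
def BetaEquation (I J K : V → V) (γI γJ γK : V → C) : Prop :=
  M.beta K I - M.beta J K = M.dc I - M.dc J ∧
    M.dc I - M.dc J = wedge12 (act1 I (act1 K γK)) (M.omega I)
      - wedge12 (act1 J (act1 K γK)) (M.omega J)
      + wedge12 (act1 K (fun W => act1 I γI W - act1 J γJ W)) (M.omega K)

variable (M) in
/-- The three-form `β_I + J(Iγ_I) ∧ ω_J + K(Iγ_I) ∧ ω_K + Iγ_I⁺ ∧ ω_I`, where
`γ_I⁺ = Jγ_J + Kγ_K`. -/
def betaTorsionForm (I J K : V → V) (γI γJ γK : V → C) : V → V → V → C :=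
  M.beta J K + wedge12 (act1 J (act1 I γI)) (M.omega J) + wedge12 (act1 K (act1 I γI)) (M.omega K)
    + wedge12 (act1 I (fun W => act1 J γJ W + act1 K γK W)) (M.omega I)

theorem betaEquation_iff :
    M.BetaEquation I J K γI γJ γK ↔ M.torsionForm I J K γJ γK = M.torsionForm J K I γK γI := by
  have beta_sub : M.beta K I - M.beta J K = M.dc I - M.dc J := by
    rw [beta, beta]
    abel
  have wedge_sub : wedge12 (act1 K (fun W => act1 I γI W - act1 J γJ W)) (M.omega K)
      = wedge12 (act1 K (act1 I γI)) (M.omega K) - wedge12 (act1 K (act1 J γJ)) (M.omega K) := by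
    funext X Y Z
    simp only [wedge12, act1, Pi.sub_apply]
    ring
  rw [BetaEquation, and_iff_right beta_sub, wedge_sub, torsionForm, torsionForm,
    ← sub_eq_zero, ← sub_eq_zero (b := _ + _ + _)]
  refine Eq.congr_left ?_
  abel

theorem torsionForm_add_torsionForm :
    M.torsionForm J K I γK γI + M.torsionForm K I J γI γJ
      = M.betaTorsionForm I J K γI γJ γK := by
  funext X Y Z
  simp only [torsionForm, betaTorsionForm, beta, wedge12, act1, Pi.add_apply]
  ring

theorem exists_isQKTTorsion_iff (h : M.IsAdapted I J K) (hn : 0 < n) :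
    (∃ T γI γJ γK, M.IsQKTTorsion I J K T γI γJ γK) ↔
      ∃ γI γJ γK : V → C, Lin1 γI ∧ Lin1 γJ ∧ Lin1 γK ∧ M.BetaEquation I J K γI γJ γK ∧
        M.BetaEquation J K I γJ γK γI ∧ M.BetaEquation K I J γK γI γJ := by
  simp only [betaEquation_iff]
  constructor
  · rintro ⟨T, γI, γJ, γK, hT⟩
    have hγI := hT.rotate.lin1_γK h.rotate hn
    have hγJ := hT.rotate.rotate.lin1_γK h.rotate.rotate hn
    have hγK := hT.lin1_γK h hn
    obtain ⟨eqI, eqJ, eqK⟩ := (isQKTTorsion_iff h hγI hγJ hγK).1 hT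
    exact ⟨γI, γJ, γK, hγI, hγJ, hγK, eqI ▸ eqJ, eqJ ▸ eqK, eqK ▸ eqI⟩
  · rintro ⟨γI, γJ, γK, hγI, hγJ, hγK, eqIJ, eqJK, -⟩
    exact ⟨M.torsionForm I J K γJ γK, γI, γJ, γK,
      (isQKTTorsion_iff h hγI hγJ hγK).2 ⟨rfl, eqIJ, eqIJ.trans eqJK⟩⟩

end BetaForms

end AQH

open AQH in
theorem statement17_general {n : ℕ} {C V : Type*} [CommRing C] [Algebra ℝ C] [AddCommGroup V]
    [Module C V] [Module ℝ V] [IsScalarTower ℝ C V] (hn : 0 < n) (M : AQH n C V) :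
    (M.inKEH ↔ ∃ γI γJ γK : V → C, Lin1 γI ∧ Lin1 γJ ∧ Lin1 γK ∧
      M.BetaEquation M.I M.J M.K γI γJ γK ∧ M.BetaEquation M.J M.K M.I γJ γK γI ∧
      M.BetaEquation M.K M.I M.J γK γI γJ) ∧
    ∀ (T : V → V → V → C) (γI γJ γK : V → C), IsQKTForm M.I M.J M.K T →
      M.QuatConn (M.nabT T) γI γJ γK →
      (2 : ℝ) • T = (2 : ℝ) • M.torsionForm M.I M.J M.K γJ γK ∧
      (2 : ℝ) • T = (2 : ℝ) • M.torsionForm M.J M.K M.I γK γI ∧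
      (2 : ℝ) • T = (2 : ℝ) • M.torsionForm M.K M.I M.J γI γJ ∧
      (2 : ℝ) • T = M.betaTorsionForm M.I M.J M.K γI γJ γK ∧
      (2 : ℝ) • T = M.betaTorsionForm M.J M.K M.I γJ γK γI ∧
      (2 : ℝ) • T = M.betaTorsionForm M.K M.I M.J γK γI γJ ∧
      (2 * ((n : ℝ) - 1)) • act1 M.I γI
        = M.Lam M.J (M.d2 (M.omega M.J)) + act1 M.I (M.Lam M.K (M.d2 (M.omega M.J))) ∧
      (2 * ((n : ℝ) - 1)) • act1 M.I γI
        = M.Lam M.K (M.d2 (M.omega M.K)) - act1 M.I (M.Lam M.J (M.d2 (M.omega M.K))) ∧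
      (2 * ((n : ℝ) - 1)) • act1 M.J γJ
        = M.Lam M.K (M.d2 (M.omega M.K)) + act1 M.J (M.Lam M.I (M.d2 (M.omega M.K))) ∧
      (2 * ((n : ℝ) - 1)) • act1 M.J γJ
        = M.Lam M.I (M.d2 (M.omega M.I)) - act1 M.J (M.Lam M.K (M.d2 (M.omega M.I))) ∧
      (2 * ((n : ℝ) - 1)) • act1 M.K γK
        = M.Lam M.I (M.d2 (M.omega M.I)) + act1 M.K (M.Lam M.J (M.d2 (M.omega M.I))) ∧
      (2 * ((n : ℝ) - 1)) • act1 M.K γK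
        = M.Lam M.J (M.d2 (M.omega M.J)) - act1 M.K (M.Lam M.I (M.d2 (M.omega M.J))) := by
  have h := M.isAdapted
  refine ⟨(M.inKEH_iff hn).trans (exists_isQKTTorsion_iff h hn), fun T γI γJ γK hT quat => ?_⟩
  have torsion := isQKTTorsion_of_quatConn hT quat
  have hγI := torsion.rotate.lin1_γK h.rotate hn
  have hγJ := torsion.rotate.rotate.lin1_γK h.rotate.rotate hn
  have hγK := torsion.lin1_γK h hn
  obtain ⟨eqI, eqJ, eqK⟩ := (isQKTTorsion_iff h hγI hγJ hγK).1 torsion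
  refine ⟨congrArg _ eqI, congrArg _ eqJ, congrArg _ eqK, ?_, ?_, ?_,
    torsion.rotate.smul_act1_K h.rotate hγK hγI,
    torsion.rotate.rotate.smul_act1_J h.rotate.rotate hγI hγJ,
    torsion.rotate.rotate.smul_act1_K h.rotate.rotate hγI hγJ,
    torsion.smul_act1_J h hγJ hγK, torsion.smul_act1_K h hγJ hγK,
    torsion.rotate.smul_act1_J h.rotate hγK hγI⟩ <;>
    rw [two_smul, ← torsionForm_add_torsionForm]
  · exact congrArg₂ _ eqJ eqK
  · exact congrArg₂ _ eqK eqI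
  · exact congrArg₂ _ eqI eqJ

open AQH in
/-- An almost quaternion-Hermitian manifold of dimension
`4n ≥ 8` is QKT iff for the local adapted basis `I, J, K` there are local
one-forms `γ_I, γ_J, γ_K` with
`β_J - β_I = I dω_I - J dω_J = I(Kγ_K) ∧ ω_I - J(Kγ_K) ∧ ω_J + Kγ_K⁻ ∧ ω_K`
(`γ_K⁻ = Iγ_I - Jγ_J`), together with the cyclic permutations.  In this case the
torsion three-form `T` satisfies
`2T = 2(I dω_I + J(Kγ_K) ∧ ω_J + K(Jγ_J) ∧ ω_K)
    = β_I + J(Iγ_I) ∧ ω_J + K(Iγ_I) ∧ ω_K + Iγ_I⁺ ∧ ω_I` (and cyclically), with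
`2(n-1) Iγ_I = (Λ_J + IΛ_K) dω_J = (Λ_K - IΛ_J) dω_K` (and cyclically). -/
theorem statement17 {n : ℕ} {C V : Type*} [CommRing C] [Algebra ℝ C] [AddCommGroup V]
    [Module C V] [Module ℝ V] [IsScalarTower ℝ C V]
    (hn : 2 ≤ n) (M : AQH n C V) :
    (M.inKEH ↔ ∃ γI γJ γK : V → C, Lin1 γI ∧ Lin1 γJ ∧ Lin1 γK ∧
      -- `β_J - β_I = I dω_I - J dω_J = I(Kγ_K) ∧ ω_I - J(Kγ_K) ∧ ω_J + Kγ_K⁻ ∧ ω_K`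
      (M.betaJ - M.betaI
          = act3 M.I (M.d2 (M.omega M.I)) - act3 M.J (M.d2 (M.omega M.J)) ∧
        act3 M.I (M.d2 (M.omega M.I)) - act3 M.J (M.d2 (M.omega M.J))
          = wedge12 (act1 M.I (act1 M.K γK)) (M.omega M.I)
            - wedge12 (act1 M.J (act1 M.K γK)) (M.omega M.J)
            + wedge12 (act1 M.K (fun W => act1 M.I γI W - act1 M.J γJ W)) (M.omega M.K)) ∧
      -- cyclic permutation `(I,J,K) → (J,K,I)`
      (M.betaK - M.betaJ
          = act3 M.J (M.d2 (M.omega M.J)) - act3 M.K (M.d2 (M.omega M.K)) ∧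
        act3 M.J (M.d2 (M.omega M.J)) - act3 M.K (M.d2 (M.omega M.K))
          = wedge12 (act1 M.J (act1 M.I γI)) (M.omega M.J)
            - wedge12 (act1 M.K (act1 M.I γI)) (M.omega M.K)
            + wedge12 (act1 M.I (fun W => act1 M.J γJ W - act1 M.K γK W)) (M.omega M.I)) ∧
      -- cyclic permutation `(I,J,K) → (K,I,J)`
      (M.betaI - M.betaK
          = act3 M.K (M.d2 (M.omega M.K)) - act3 M.I (M.d2 (M.omega M.I)) ∧
        act3 M.K (M.d2 (M.omega M.K)) - act3 M.I (M.d2 (M.omega M.I))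
          = wedge12 (act1 M.K (act1 M.J γJ)) (M.omega M.K)
            - wedge12 (act1 M.I (act1 M.J γJ)) (M.omega M.I)
            + wedge12 (act1 M.J (fun W => act1 M.K γK W - act1 M.I γI W)) (M.omega M.J))) ∧
    -- in the QKT case, for the torsion three-form `T` of the QKT connection
    (∀ (T : V → V → V → C) (γI γJ γK : V → C),
      (IsAlt3 T ∧ Lin3 T ∧ calL M.I T = T ∧ calL M.J T = T ∧ calL M.K T = T ∧
        M.MetricConn (M.nabT T) ∧ M.QuatConn (M.nabT T) γI γJ γK) →
      -- `2T = 2(I dω_I + J(Kγ_K) ∧ ω_J + K(Jγ_J) ∧ ω_K)`, and cyclically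
      ((2:ℝ) • T = (2:ℝ) • (act3 M.I (M.d2 (M.omega M.I))
          + wedge12 (act1 M.J (act1 M.K γK)) (M.omega M.J)
          + wedge12 (act1 M.K (act1 M.J γJ)) (M.omega M.K))) ∧
      ((2:ℝ) • T = (2:ℝ) • (act3 M.J (M.d2 (M.omega M.J))
          + wedge12 (act1 M.K (act1 M.I γI)) (M.omega M.K)
          + wedge12 (act1 M.I (act1 M.K γK)) (M.omega M.I))) ∧
      ((2:ℝ) • T = (2:ℝ) • (act3 M.K (M.d2 (M.omega M.K))
          + wedge12 (act1 M.I (act1 M.J γJ)) (M.omega M.I)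
          + wedge12 (act1 M.J (act1 M.I γI)) (M.omega M.J))) ∧
      -- `2T = β_I + J(Iγ_I) ∧ ω_J + K(Iγ_I) ∧ ω_K + Iγ_I⁺ ∧ ω_I`, and cyclically
      ((2:ℝ) • T = M.betaI
          + wedge12 (act1 M.J (act1 M.I γI)) (M.omega M.J)
          + wedge12 (act1 M.K (act1 M.I γI)) (M.omega M.K)
          + wedge12 (act1 M.I (fun W => act1 M.J γJ W + act1 M.K γK W)) (M.omega M.I)) ∧
      ((2:ℝ) • T = M.betaJ
          + wedge12 (act1 M.K (act1 M.J γJ)) (M.omega M.K)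
          + wedge12 (act1 M.I (act1 M.J γJ)) (M.omega M.I)
          + wedge12 (act1 M.J (fun W => act1 M.K γK W + act1 M.I γI W)) (M.omega M.J)) ∧
      ((2:ℝ) • T = M.betaK
          + wedge12 (act1 M.I (act1 M.K γK)) (M.omega M.I)
          + wedge12 (act1 M.J (act1 M.K γK)) (M.omega M.J)
          + wedge12 (act1 M.K (fun W => act1 M.I γI W + act1 M.J γJ W)) (M.omega M.K)) ∧
      -- `2(n-1) Iγ_I = (Λ_J + IΛ_K) dω_J = (Λ_K - IΛ_J) dω_K`, and cyclically
      ((2*((n:ℝ)-1)) • act1 M.I γI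
          = M.Lam M.J (M.d2 (M.omega M.J)) + act1 M.I (M.Lam M.K (M.d2 (M.omega M.J)))) ∧
      ((2*((n:ℝ)-1)) • act1 M.I γI
          = M.Lam M.K (M.d2 (M.omega M.K)) - act1 M.I (M.Lam M.J (M.d2 (M.omega M.K)))) ∧
      ((2*((n:ℝ)-1)) • act1 M.J γJ
          = M.Lam M.K (M.d2 (M.omega M.K)) + act1 M.J (M.Lam M.I (M.d2 (M.omega M.K)))) ∧
      ((2*((n:ℝ)-1)) • act1 M.J γJ
          = M.Lam M.I (M.d2 (M.omega M.I)) - act1 M.J (M.Lam M.K (M.d2 (M.omega M.I)))) ∧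
      ((2*((n:ℝ)-1)) • act1 M.K γK
          = M.Lam M.I (M.d2 (M.omega M.I)) + act1 M.K (M.Lam M.J (M.d2 (M.omega M.I)))) ∧
      ((2*((n:ℝ)-1)) • act1 M.K γK
          = M.Lam M.J (M.d2 (M.omega M.J)) - act1 M.K (M.Lam M.I (M.d2 (M.omega M.J))))) := by
  obtain ⟨inKEH_iff, torsion⟩ := statement17_general (by omega) M
  exact ⟨inKEH_iff, fun T γI γJ γK ⟨alt, lin, calL_I, calL_J, calL_K, _, quat⟩ =>
    torsion T γI γJ γK ⟨⟨alt, lin⟩, calL_I, calL_J, calL_K⟩ quat⟩
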